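/- Let k ≥ 3, n sufficiently large relative to k (n > Ck for an absolute constant C suffices). Among all intersecting families F ⊆ C([n],k) with covering number τ(F) ≥ 3, the maximum size is |C_3(n,k)|, where C_3(n,k) is the maximal intersecting family whose sets avoiding element 1 form a copy of T_2(k) = {[k], {1}∪[k+1,2k-1], {2}∪[k+1,2k-1]} (on the ground set [2,n]). -/

import Mathlib

open Finset

/-- `S` is a hitting set (cover) for the family `F`. -/
def covers (S : Finset ℕ) (F : Finset (Finset ℕ)) : Prop := ∀ A ∈ F, (S ∩ A).Nonempty

/-- The copy of `T_2(k)` on the ground set `[2,n]`: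
`{[2,k+1], {2} ∪ [k+2,2k], {3} ∪ [k+2,2k]}`. -/
def T2fam (k : ℕ) : Finset (Finset ℕ) :=
  {Finset.Icc 2 (k + 1), insert 2 (Finset.Icc (k + 2) (2 * k)),
    insert 3 (Finset.Icc (k + 2) (2 * k))}

/-- The family `C_3(n,k)`: the copy of `T_2(k)` on `[2,n]` together with all `k`-subsets of
`[n]` containing `1` that meet all three of its members. -/
def C3fam (n k : ℕ) : Finset (Finset ℕ) :=
  T2fam k ∪
    ((Finset.Icc 1 n).powersetCard k).filter
      (fun A => 1 ∈ A ∧ ∀ B ∈ T2fam k, (A ∩ B).Nonempty)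

/-!
Fix a point `x`. The members of `F` through `x` meet all members avoiding `x`, so, with `G` the
subfamily of `F` avoiding `x`, `|F|` is at most `C(n-1, k-1) + |G|` minus the number of
`(k-1)`-sets that miss some member of `G`. Since `τ(G) ≥ 2`, inclusion–exclusion bounds this loss
from below by its value for `T_2(k)`, with a gain of `C(n-2k, k-3)` as soon as `|G| ≥ 4`. This
settles the case `|G| ≤ C(n-2k, k-3) + 3`, in which `C_3(n,k)` is extremal.

It remains to find an `x` for which a larger `G` makes `F` small.

* By shifting towards smaller elements, which lowers the covering number by at most one, we may
  assume that some `x` lies in a third of the members. For `n ≥ 100k²` a large `G` forces all but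
  few members through `x` to contain one of at most `3k` three-element covers, fewer than the
  roughly `k²` such covers of `C_3(n,k)`. For `n < 100k²` the Kruskal–Katona theorem, applied to
  `G`, bounds the number of members through `x`.
* For `4 ≤ k < 100` saturate `F` instead. Then its three-element covers intersect; either they share
  a point `x`, and `G` is small, or there are at most `3k` of them.
* For `k = 3` a family with `τ ≥ 3` has at most ten members.
-/

section CoverNumber

variable {α : Type*} {F G : Finset (Finset α)} {t : ℕ}

/-- The covering number of `F` is larger than `t`: no set of at most `t` points meets all
members of `F`. -/
def CoverNumberGT (F : Finset (Finset α)) (t : ℕ) : Prop :=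
  ∀ S : Finset α, #S ≤ t → ∃ A ∈ F, Disjoint A S

lemma CoverNumberGT.mono (h : CoverNumberGT F t) (hFG : F ⊆ G) : CoverNumberGT G t :=
  fun S hS => (h S hS).imp fun _ hA => ⟨hFG hA.1, hA.2⟩

lemma CoverNumberGT.exists_notMem (h : CoverNumberGT F 1) (y : α) : ∃ A ∈ F, y ∉ A := by
  simpa using h {y} (by simp)

end CoverNumber

section Families

variable {α : Type*} [DecidableEq α]

/-- The families over which the theorem maximises: intersecting families of `k`-subsets of `V`
with covering number at least three. -/
structure IsCoverThree (V : Finset α) (k : ℕ) (F : Finset (Finset α)) : Prop where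
  subset : F ⊆ V.powersetCard k
  intersecting : (F : Set (Finset α)).Intersecting
  coverNumberGT : CoverNumberGT F 2

/-- The `r`-subsets of `V` that meet every member of `G`. -/
def transversals (V : Finset α) (r : ℕ) (G : Finset (Finset α)) : Finset (Finset α) :=
  {A ∈ V.powersetCard r | ∀ B ∈ G, ¬ Disjoint A B}

/-- The `r`-subsets of `V` that are disjoint from some member of `G`. -/
def nonTransversals (V : Finset α) (r : ℕ) (G : Finset (Finset α)) : Finset (Finset α) :=
  {A ∈ V.powersetCard r | ∃ B ∈ G, Disjoint A B}

variable {V : Finset α} {F G : Finset (Finset α)} {k r t : ℕ}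

lemma IsCoverThree.sized (hF : IsCoverThree V k F) : (F : Set (Finset α)).Sized k :=
  fun _ hA => (mem_powersetCard.1 (hF.subset hA)).2

lemma mem_transversals {A : Finset α} :
    A ∈ transversals V r G ↔ A ∈ V.powersetCard r ∧ ∀ B ∈ G, ¬ Disjoint A B := mem_filter

lemma mem_nonTransversals {A : Finset α} :
    A ∈ nonTransversals V r G ↔ A ∈ V.powersetCard r ∧ ∃ B ∈ G, Disjoint A B := mem_filter

lemma card_transversals_add_card_nonTransversals (V : Finset α) (r : ℕ) (G : Finset (Finset α)) :
    #(transversals V r G) + #(nonTransversals V r G) = (#V).choose r := by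
  have h : nonTransversals V r G = {A ∈ V.powersetCard r | ¬ ∀ B ∈ G, ¬ Disjoint A B} := by
    simp only [nonTransversals, not_forall, not_not, exists_prop]
  rw [h, transversals, card_filter_add_card_filter_not, card_powersetCard]

lemma CoverNumberGT.nonMemberSubfamily (h : CoverNumberGT F (t + 1)) (x : α) :
    CoverNumberGT (F.nonMemberSubfamily x) t := by
  intro S hS
  obtain ⟨A, hA, hAS⟩ := h (insert x S) ((card_insert_le x S).trans (by omega))
  rw [disjoint_insert_right] at hAS
  exact ⟨A, mem_nonMemberSubfamily.2 ⟨hA, hAS.1⟩, hAS.2⟩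

lemma card_memberSubfamily (F : Finset (Finset α)) (x : α) :
    #(F.memberSubfamily x) = #{A ∈ F | x ∈ A} := by
  rw [← image_insert_memberSubfamily, card_image_of_injOn]
  exact (insert_erase_invOn.2.injOn).mono fun A hA => (mem_memberSubfamily.1 hA).2

lemma card_filter_subset_disjoint {S W : Finset α} (r : ℕ) (hSV : S ⊆ V) (hSW : Disjoint S W) :
    #{A ∈ V.powersetCard (#S + r) | S ⊆ A ∧ Disjoint A W} = (#(V \ (S ∪ W))).choose r := by
  have hdisj {R : Finset α} (hR : R ⊆ V \ (S ∪ W)) : Disjoint R S ∧ Disjoint R W :=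
    disjoint_union_right.1 (subset_sdiff.1 hR).2
  rw [← card_powersetCard]
  refine card_nbij' (· \ S) (S ∪ ·) ?_ ?_ ?_ ?_
  · intro A hA
    rw [mem_coe, mem_filter, mem_powersetCard] at hA
    obtain ⟨⟨hAV, hAc⟩, hSA, hAW⟩ := hA
    rw [mem_coe, mem_powersetCard]
    refine ⟨subset_sdiff.2 ⟨sdiff_subset.trans hAV, disjoint_union_right.2
      ⟨sdiff_disjoint, hAW.mono_left sdiff_subset⟩⟩, ?_⟩
    rw [card_sdiff_of_subset hSA, hAc, Nat.add_sub_cancel_left]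
  · intro R hR
    rw [mem_coe, mem_powersetCard] at hR
    obtain ⟨hRS, hRW⟩ := hdisj hR.1
    rw [mem_coe, mem_filter, mem_powersetCard, card_union_of_disjoint hRS.symm, hR.2]
    exact ⟨⟨union_subset hSV (hR.1.trans sdiff_subset), rfl⟩, subset_union_left,
      disjoint_union_left.2 ⟨hSW, hRW⟩⟩
  · intro A hA
    exact union_sdiff_of_subset (mem_filter.1 hA).2.1
  · intro R hR
    exact union_sdiff_cancel_left (hdisj (mem_powersetCard.1 hR).1).1.symm

lemma choose_le_card_filter_subset_disjoint {S W : Finset α} {p r : ℕ} (hSV : S ⊆ V)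
    (hSW : Disjoint S W) (hp : p + #S + #W ≤ #V) :
    p.choose r ≤ #{A ∈ V.powersetCard (#S + r) | S ⊆ A ∧ Disjoint A W} := by
  rw [card_filter_subset_disjoint r hSV hSW]
  have h₁ := le_card_sdiff (S ∪ W) V
  have h₂ := card_union_le S W
  exact Nat.choose_le_choose _ (by omega)

lemma card_filter_subset_le {S : Finset α} (hF : F ⊆ V.powersetCard k) :
    #{A ∈ F | S ⊆ A} ≤ (#V - #S).choose (k - #S) := by
  obtain hF₀ | ⟨A, hA⟩ := {A ∈ F | S ⊆ A}.eq_empty_or_nonempty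
  · simp [hF₀]
  obtain ⟨hAF, hSA⟩ := mem_filter.1 hA
  obtain ⟨hAV, hAk⟩ := mem_powersetCard.1 (hF hAF)
  have hSk := card_le_card hSA
  have h := card_filter_subset_disjoint (k - #S) (hSA.trans hAV) (disjoint_empty_right S)
  rw [union_empty, card_sdiff_of_subset (hSA.trans hAV)] at h
  rw [← h, Nat.add_sub_of_le (by omega)]
  refine card_le_card fun B hB => ?_
  rw [mem_filter] at hB ⊢
  exact ⟨hF hB.1, hB.2, disjoint_empty_right B⟩

/-- The idea is to extend `S` one point at a time: a set avoided by some member of `F` has at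
most `b` ways to grow, and after `d` steps the supersets of each result are counted directly. -/
lemma card_filter_subset_le_pow_mul_choose {b q : ℕ} (hF : F ⊆ V.powersetCard k) (S₀ : Finset α)
    (hbranch : ∀ S, S₀ ⊆ S → #S ≤ q → ∃ B, #B ≤ b ∧ Disjoint B S ∧
      ∀ A ∈ F, S ⊆ A → ¬ Disjoint A B) (d : ℕ) :
    ∀ S, S₀ ⊆ S → #S + d = q + 1 →
      #{A ∈ F | S ⊆ A} ≤ b ^ d * (#V - (q + 1)).choose (k - (q + 1)) := by
  induction d with
  | zero =>
    intro S _ hS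
    rw [add_zero] at hS
    simpa [hS] using card_filter_subset_le (S := S) hF
  | succ d ih =>
    intro S hS₀ hS
    obtain ⟨B, hBb, hBS, hB⟩ := hbranch S hS₀ (by omega)
    have hcover : {A ∈ F | S ⊆ A} ⊆ B.biUnion fun z => {A ∈ F | insert z S ⊆ A} := by
      intro A hA
      obtain ⟨hAF, hSA⟩ := mem_filter.1 hA
      obtain ⟨z, hzA, hzB⟩ := not_disjoint_iff.1 (hB A hAF hSA)
      exact mem_biUnion.2 ⟨z, hzB, mem_filter.2 ⟨hAF, insert_subset hzA hSA⟩⟩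
    have hstep : ∀ z ∈ B, #{A ∈ F | insert z S ⊆ A} ≤
        b ^ d * (#V - (q + 1)).choose (k - (q + 1)) := fun z hz =>
      ih _ (hS₀.trans (subset_insert z S)) (by
        rw [card_insert_of_notMem (disjoint_left.1 hBS hz)]; omega)
    calc #{A ∈ F | S ⊆ A}
        ≤ #B * (b ^ d * (#V - (q + 1)).choose (k - (q + 1))) :=
          (card_le_card hcover).trans (card_biUnion_le_card_mul _ _ _ hstep)
      _ ≤ b * (b ^ d * (#V - (q + 1)).choose (k - (q + 1))) := Nat.mul_le_mul_right _ hBb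
      _ = b ^ (d + 1) * (#V - (q + 1)).choose (k - (q + 1)) := by rw [pow_succ']; ring

end Families

lemma choose_add_succ_eq_add_sum (a r t : ℕ) :
    (a + t).choose (r + 1) = a.choose (r + 1) + ∑ l ∈ range t, (a + l).choose r := by
  induction t with
  | zero => simp
  | succ t ih => rw [← add_assoc, Nat.choose_succ_succ', ih, sum_range_succ]; ring

section Loss

variable {α : Type*} [DecidableEq α] {V : Finset α} {G : Finset (Finset α)} {k r p q j i : ℕ}

lemma filter_disjoint_powersetCard (V B : Finset α) (r : ℕ) :
    {A ∈ V.powersetCard r | Disjoint A B} = (V \ B).powersetCard r := by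
  ext A
  simp only [mem_filter, mem_powersetCard, subset_sdiff, and_right_comm]

/-- Ordering the points of `I`, count for each `y ∈ I` the sets whose first point in `I` is `y`
and that miss some member of `G` avoiding `y`. -/
lemma sum_choose_le_card_nonTransversals_meeting (hG : ∀ B ∈ G, #B ≤ k) (hp : p + k + 1 ≤ #V)
    {I : Finset α} (hIV : I ⊆ V) (hI : ∀ y ∈ I, ∃ B ∈ G, y ∉ B) (hIp : #I ≤ p + 1) :
    ∑ l ∈ range #I, (p - l).choose r ≤
      #{A ∈ nonTransversals V (r + 1) G | ¬ Disjoint A I} := by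
  induction I using Finset.induction_on with
  | empty => simp
  | insert y I hy ih =>
    rw [card_insert_of_notMem hy] at hIp
    rw [insert_subset_iff] at hIV
    obtain ⟨B, hB, hyB⟩ := hI y (mem_insert_self y I)
    have hold := ih hIV.2 (fun z hz => hI z (mem_insert_of_mem hz)) (by omega)
    have hnew := choose_le_card_filter_subset_disjoint (S := {y}) (W := I ∪ B) (r := r)
      (p := p - #I) (singleton_subset_iff.2 hIV.1) (by simp [hy, hyB]) (by
        have := card_union_le I B
        have := hG B hB
        rw [card_singleton]; omega)
    rw [card_singleton, add_comm 1] at hnew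
    rw [card_insert_of_notMem hy, sum_range_succ]
    refine (Nat.add_le_add hold hnew).trans ?_
    rw [← card_union_of_disjoint]
    · refine card_le_card fun A hA => ?_
      simp only [mem_union, mem_filter, mem_nonTransversals, singleton_subset_iff,
        disjoint_union_right] at hA ⊢
      rcases hA with ⟨⟨hAV, hAG⟩, hAI⟩ | ⟨hAV, hyA, _, hAB⟩
      · exact ⟨⟨hAV, hAG⟩, fun h => hAI (h.mono_right (subset_insert y I))⟩
      · exact ⟨⟨hAV, B, hB, hAB⟩, fun h => disjoint_left.1 h hyA (mem_insert_self y I)⟩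
    · refine disjoint_left.2 fun A hA hA' => (mem_filter.1 hA).2 ?_
      exact (disjoint_union_right.1 (mem_filter.1 hA').2.2).1

variable {B₁ B₂ : Finset α}

/-- Inclusion–exclusion for the sets missing `B₁` or `B₂`, together with a supply `X` of
non-transversals that meet both. -/
lemma two_mul_choose_add_card_le (hG : G ⊆ V.powersetCard k) (h₁ : B₁ ∈ G) (h₂ : B₂ ∈ G)
    {X : Finset (Finset α)}
    (hX : ∀ A ∈ X, A ∈ nonTransversals V r G ∧ ¬ Disjoint A B₁ ∧ ¬ Disjoint A B₂) :
    2 * (#V - k).choose r + #X ≤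
      #(nonTransversals V r G) + (#V + #(B₁ ∩ B₂) - 2 * k).choose r := by
  obtain ⟨hV₁, hk₁⟩ := mem_powersetCard.1 (hG h₁)
  obtain ⟨hV₂, hk₂⟩ := mem_powersetCard.1 (hG h₂)
  have hinter : (V \ B₁).powersetCard r ∩ (V \ B₂).powersetCard r =
      (V \ (B₁ ∪ B₂)).powersetCard r := by
    simp only [← filter_disjoint_powersetCard, ← filter_and, disjoint_union_right]
  have hincl := card_union_add_card_inter ((V \ B₁).powersetCard r) ((V \ B₂).powersetCard r)
  rw [hinter, card_powersetCard, card_powersetCard, card_powersetCard,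
    card_sdiff_of_subset hV₁, card_sdiff_of_subset hV₂,
    card_sdiff_of_subset (union_subset hV₁ hV₂), hk₁, hk₂] at hincl
  have hB := card_union_add_card_inter B₁ B₂
  have hBV := card_le_card (union_subset hV₁ hV₂)
  rw [show #V - #(B₁ ∪ B₂) = #V + #(B₁ ∩ B₂) - 2 * k by omega] at hincl
  have hmiss : #((V \ B₁).powersetCard r ∪ (V \ B₂).powersetCard r) + #X ≤
      #(nonTransversals V r G) := by
    simp only [← filter_disjoint_powersetCard, ← filter_or]
    rw [← card_union_of_disjoint]
    · refine card_le_card (union_subset (fun A hA => ?_) fun A hA => (hX A hA).1)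
      obtain ⟨hAV, hA | hA⟩ := mem_filter.1 hA
      · exact mem_nonTransversals.2 ⟨hAV, B₁, h₁, hA⟩
      · exact mem_nonTransversals.2 ⟨hAV, B₂, h₂, hA⟩
    · refine disjoint_left.2 fun A hA hAX => ?_
      exact (mem_filter.1 hA).2.elim (hX A hAX).2.1 (hX A hAX).2.2
  omega

/-- The case `r = k - 1` and `|V| = q + 2k - 1`, with `k = j + 3`, of the previous bound. -/
lemma two_mul_choose_add_card_le_of_card_inter (hV : #V = q + 2 * j + 5)
    (hG : G ⊆ V.powersetCard (j + 3)) (h₁ : B₁ ∈ G) (h₂ : B₂ ∈ G) (hi : #(B₁ ∩ B₂) = i + 1)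
    {X : Finset (Finset α)}
    (hX : ∀ A ∈ X, A ∈ nonTransversals V (j + 2) G ∧ ¬ Disjoint A B₁ ∧ ¬ Disjoint A B₂) :
    2 * (q + j + 2).choose (j + 2) + #X ≤
      #(nonTransversals V (j + 2) G) + (q + i).choose (j + 2) := by
  have h := two_mul_choose_add_card_le hG h₁ h₂ hX
  rwa [hV, hi, show q + 2 * j + 5 - (j + 3) = q + j + 2 by omega,
    show q + 2 * j + 5 + (i + 1) - 2 * (j + 3) = q + i by omega] at h

lemma two_mul_choose_add_sum_le (hV : #V = q + 2 * j + 5) (hG : G ⊆ V.powersetCard (j + 3))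
    (hτ : CoverNumberGT G 1) (h₁ : B₁ ∈ G) (h₂ : B₂ ∈ G) (hi : #(B₁ ∩ B₂) = i + 1)
    (hij : i ≤ j + 1) :
    2 * (q + j + 2).choose (j + 2) + (q + j + 1).choose (j + 1) +
        ∑ l ∈ range i, (q + j + 1 - i + l).choose (j + 1) ≤
      #(nonTransversals V (j + 2) G) + (q + i).choose (j + 2) := by
  have hmeet := sum_choose_le_card_nonTransversals_meeting (p := q + j + 1) (r := j + 1)
    (fun B hB => (mem_powersetCard.1 (hG hB)).2.le) (by omega)
    (inter_subset_left.trans (mem_powersetCard.1 (hG h₁)).1) (fun y _ => hτ.exists_notMem y)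
    (I := B₁ ∩ B₂) (by omega)
  rw [hi, sum_range_succ', ← sum_range_reflect] at hmeet
  have hreflect : ∑ l ∈ range i, (q + j + 1 - i + l).choose (j + 1) =
      ∑ l ∈ range i, (q + j + 1 - (i - 1 - l + 1)).choose (j + 1) :=
    sum_congr rfl fun l hl => by rw [mem_range] at hl; congr 1; omega
  have hpair := two_mul_choose_add_card_le_of_card_inter hV hG h₁ h₂ hi
    (X := {A ∈ nonTransversals V (j + 2) G | ¬ Disjoint A (B₁ ∩ B₂)}) fun A hA => by
      obtain ⟨hAm, hAI⟩ := mem_filter.1 hA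
      exact ⟨hAm, fun h => hAI (h.mono_right inter_subset_left),
        fun h => hAI (h.mono_right inter_subset_right)⟩
  rw [Nat.sub_zero, show j + 1 + 1 = j + 2 from rfl] at hmeet
  omega

lemma card_inter_lt_of_ne {A B : Finset α} (hA : #A = k) (hB : #B = k) (hAB : A ≠ B) :
    #(A ∩ B) < k := by
  refine lt_of_le_of_ne (hA ▸ card_le_card inter_subset_left) fun h => hAB ?_
  rw [← eq_of_subset_of_card_le inter_subset_left (hA.trans h.symm).le,
    eq_of_subset_of_card_le inter_subset_right (hB.trans h.symm).le]

lemma choose_le_card_nonTransversals (hV : #V = q + 2 * j + 5)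
    (hG : G ⊆ V.powersetCard (j + 3)) (hint : (G : Set (Finset α)).Intersecting)
    (hτ : CoverNumberGT G 1) :
    2 * (q + j + 2).choose (j + 2) + (q + j + 1).choose (j + 1) ≤
      #(nonTransversals V (j + 2) G) + q.choose (j + 2) := by
  obtain ⟨B₁, h₁, -⟩ := hτ ∅ (by simp)
  have hc₁ := (mem_powersetCard.1 (hG h₁)).2
  obtain ⟨y, hy⟩ : B₁.Nonempty := card_pos.1 (by omega)
  obtain ⟨B₂, h₂, hy₂⟩ := hτ.exists_notMem y
  have hpos := card_pos.2 (not_disjoint_iff_nonempty_inter.1 (hint h₁ h₂))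
  have hlt := card_inter_lt_of_ne hc₁ (mem_powersetCard.1 (hG h₂)).2 fun h => hy₂ (h ▸ hy)
  obtain ⟨i, hi⟩ : ∃ i, #(B₁ ∩ B₂) = i + 1 := ⟨#(B₁ ∩ B₂) - 1, by omega⟩
  have hloss := two_mul_choose_add_sum_le hV hG hτ h₁ h₂ hi (by omega)
  have hsum : ∑ l ∈ range i, (q + l).choose (j + 1) ≤
      ∑ l ∈ range i, (q + j + 1 - i + l).choose (j + 1) :=
    sum_le_sum fun l _ => Nat.choose_le_choose _ (by omega)
  have hexpand : (q + i).choose (j + 2) =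
      q.choose (j + 2) + ∑ l ∈ range i, (q + l).choose (j + 1) :=
    choose_add_succ_eq_add_sum q (j + 1) i
  omega

/-- The third condition makes the sets containing `S` and missing `W` different from those
containing `y` and missing `B₃`. -/
lemma exists_pair_of_inter_eq_singleton (hG : G ⊆ V.powersetCard k)
    (hτ : CoverNumberGT G 1) (h4 : 4 ≤ #G) (h₁ : B₁ ∈ G) (h₂ : B₂ ∈ G) {y : α}
    (hy : B₁ ∩ B₂ = {y}) :
    ∃ B₃ ∈ G, ∃ S ⊆ V, ∃ W ∈ G, y ∉ B₃ ∧ #S = 2 ∧ (y ∈ W ∨ ¬ Disjoint S B₃) ∧ Disjoint S W ∧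
      ¬ Disjoint S B₁ ∧ ¬ Disjoint S B₂ := by
  have hk {B : Finset α} (hB : B ∈ G) : #B = k := (mem_powersetCard.1 (hG hB)).2
  have hV {B : Finset α} (hB : B ∈ G) : B ⊆ V := (mem_powersetCard.1 (hG hB)).1
  have hpick {A B : Finset α} (hA : A ∈ G) (hB : B ∈ G) (hAB : A ≠ B) : ∃ a ∈ A, a ∉ B :=
    not_subset.1 fun h => hAB (eq_of_subset_of_card_le h (by rw [hk hA, hk hB]))
  obtain ⟨hy₁, hy₂⟩ := mem_inter.1 (hy ▸ mem_singleton_self y)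
  obtain ⟨B₃, h₃, hy₃⟩ := hτ.exists_notMem y
  obtain ⟨W, hW, hW'⟩ : ∃ W ∈ G, W ∉ ({B₁, B₂, B₃} : Finset (Finset α)) := by
    refine not_subset.1 fun h => ?_
    have := card_le_card h
    have := card_le_three (a := B₁) (b := B₂) (c := B₃)
    omega
  simp only [mem_insert, mem_singleton, not_or] at hW'
  refine ⟨B₃, h₃, ?_⟩
  by_cases hyW : y ∈ W
  · obtain ⟨a, ha, haW⟩ := hpick h₁ hW (Ne.symm hW'.1)
    obtain ⟨b, hb, hbW⟩ := hpick h₂ hW (Ne.symm hW'.2.1)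
    have hab : a ≠ b := by
      rintro rfl
      have : a ∈ ({y} : Finset α) := hy ▸ mem_inter.2 ⟨ha, hb⟩
      exact haW (mem_singleton.1 this ▸ hyW)
    exact ⟨{a, b}, insert_subset (hV h₁ ha) (singleton_subset_iff.2 (hV h₂ hb)), W, hW, hy₃,
      card_pair hab, Or.inl hyW, by simp [haW, hbW], by simp [ha], by simp [hb]⟩
  · obtain ⟨b, hb, hbW⟩ := hpick h₃ hW (Ne.symm hW'.2.2)
    have hyb : y ≠ b := fun h => hy₃ (h ▸ hb)
    exact ⟨{y, b}, insert_subset (hV h₁ hy₁) (singleton_subset_iff.2 (hV h₃ hb)), W, hW, hy₃,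
      card_pair hyb, Or.inr (by simp [hb]), by simp [hyW, hbW], by simp [hy₁], by simp [hy₂]⟩

lemma choose_add_choose_le_card_nonTransversals_of_card_inter_eq_one (hV : #V = q + 2 * j + 5)
    (hG : G ⊆ V.powersetCard (j + 3)) (hτ : CoverNumberGT G 1) (h4 : 4 ≤ #G)
    (h₁ : B₁ ∈ G) (h₂ : B₂ ∈ G) (hi : #(B₁ ∩ B₂) = 1) :
    2 * (q + j + 2).choose (j + 2) + (q + j + 1).choose (j + 1) + q.choose j ≤
      #(nonTransversals V (j + 2) G) + q.choose (j + 2) := by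
  obtain ⟨y, hy⟩ := card_eq_one.1 hi
  obtain ⟨hy₁, hy₂⟩ := mem_inter.1 (hy ▸ mem_singleton_self y)
  obtain ⟨B₃, h₃, S, hSV, W, hW, hy₃, hS2, hS₃, hSW, hS₁, hS₂⟩ :=
    exists_pair_of_inter_eq_singleton hG hτ h4 h₁ h₂ hy
  have hyV : y ∈ V := (mem_powersetCard.1 (hG h₁)).1 hy₁
  have hy_count := choose_le_card_filter_subset_disjoint (S := {y}) (W := B₃) (p := q + j + 1)
    (r := j + 1) (singleton_subset_iff.2 hyV) (disjoint_singleton_left.2 hy₃)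
    (by rw [card_singleton, (mem_powersetCard.1 (hG h₃)).2]; omega)
  have hS_count := choose_le_card_filter_subset_disjoint (p := q) (r := j) hSV hSW
    (by rw [hS2, (mem_powersetCard.1 (hG hW)).2]; omega)
  rw [card_singleton, show 1 + (j + 1) = j + 2 by omega] at hy_count
  rw [hS2, add_comm 2] at hS_count
  have hpair := two_mul_choose_add_card_le_of_card_inter hV hG h₁ h₂ hi
    (X := {A ∈ V.powersetCard (j + 2) | {y} ⊆ A ∧ Disjoint A B₃} ∪
      {A ∈ V.powersetCard (j + 2) | S ⊆ A ∧ Disjoint A W}) fun A hA => by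
    rcases mem_union.1 hA with hA | hA
    · obtain ⟨hAV, hyA, hAB⟩ := mem_filter.1 hA
      rw [singleton_subset_iff] at hyA
      exact ⟨mem_nonTransversals.2 ⟨hAV, B₃, h₃, hAB⟩, not_disjoint_iff.2 ⟨y, hyA, hy₁⟩,
        not_disjoint_iff.2 ⟨y, hyA, hy₂⟩⟩
    · obtain ⟨hAV, hSA, hAW⟩ := mem_filter.1 hA
      exact ⟨mem_nonTransversals.2 ⟨hAV, W, hW, hAW⟩, fun h => hS₁ (h.mono_left hSA),
        fun h => hS₂ (h.mono_left hSA)⟩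
  rw [card_union_of_disjoint] at hpair
  · rw [add_zero] at hpair
    omega
  · refine disjoint_left.2 fun A hA hA' => ?_
    obtain ⟨-, hyA, hAB⟩ := mem_filter.1 hA
    obtain ⟨-, hSA, hAW⟩ := mem_filter.1 hA'
    rw [singleton_subset_iff] at hyA
    exact hS₃.elim (disjoint_left.1 hAW hyA) fun h => h (hAB.mono_left hSA)

lemma erase_subset_of_card_le_card_inter_add_one {A B : Finset α} {y : α} (hyB : y ∈ B)
    (hyA : y ∉ A) (h : #B ≤ #(B ∩ A) + 1) : B.erase y ⊆ A := by
  have hsub : B ∩ A ⊆ B.erase y := fun z hz =>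
    mem_erase.2 ⟨fun hzy => hyA (hzy ▸ (mem_inter.1 hz).2), (mem_inter.1 hz).1⟩
  rw [← eq_of_subset_of_card_le hsub (by rw [card_erase_of_mem hyB]; omega)]
  exact inter_subset_right

lemma choose_add_two_choose_le (q j : ℕ) :
    (q + (j + 1)).choose (j + 2) + (q + j + 1).choose (j + 1) + q.choose j ≤
      q.choose (j + 2) + (j + 2) * (q + j + 1).choose (j + 1) := by
  have hexpand : (q + (j + 1)).choose (j + 2) =
      q.choose (j + 2) + ∑ l ∈ range (j + 1), (q + l).choose (j + 1) :=
    choose_add_succ_eq_add_sum q (j + 1) (j + 1)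
  have hsum : ∑ l ∈ range j, (q + (l + 1)).choose (j + 1) ≤ j * (q + j + 1).choose (j + 1) := by
    simpa using sum_le_card_nsmul (range j) _ _ fun l hl =>
      Nat.choose_le_choose (j + 1) (show q + (l + 1) ≤ q + j + 1 by rw [mem_range] at hl; omega)
  have hpascal := Nat.choose_succ_succ' q j
  have hmono : (q + 1).choose (j + 1) ≤ (q + j + 1).choose (j + 1) :=
    Nat.choose_le_choose _ (by omega)
  rw [sum_range_succ', add_zero] at hexpand
  rw [add_mul]
  omega

/-- Any member avoiding `y ∈ B` contains `B \ {y}`, so a set that contains `y` and misses such a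
member contains no other point of `B`. -/
lemma choose_add_choose_le_card_nonTransversals_of_forall_card_inter (hV : #V = q + 2 * j + 5)
    (hG : G ⊆ V.powersetCard (j + 3)) (hτ : CoverNumberGT G 1)
    (hall : ∀ A ∈ G, ∀ B ∈ G, A ≠ B → #(A ∩ B) = j + 2) (h₁ : B₁ ∈ G) (h₂ : B₂ ∈ G)
    (h₁₂ : B₁ ≠ B₂) :
    2 * (q + j + 2).choose (j + 2) + (q + j + 1).choose (j + 1) + q.choose j ≤
      #(nonTransversals V (j + 2) G) + q.choose (j + 2) := by
  have hi := hall B₁ h₁ B₂ h₂ h₁₂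
  obtain ⟨hV₁, hc₁⟩ := mem_powersetCard.1 (hG h₁)
  choose g hgG hg using hτ.exists_notMem
  have herase : ∀ y ∈ B₁, B₁.erase y ⊆ g y := fun y hy =>
    erase_subset_of_card_le_card_inter_add_one hy (hg y)
      (by rw [hall B₁ h₁ (g y) (hgG y) fun h => hg y (h ▸ hy), hc₁])
  let X (y : α) : Finset (Finset α) := {A ∈ V.powersetCard (j + 2) | {y} ⊆ A ∧ Disjoint A (g y)}
  have hXcard : ∀ y ∈ B₁ ∩ B₂, (q + j + 1).choose (j + 1) ≤ #(X y) := fun y hy => by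
    have h := choose_le_card_filter_subset_disjoint (S := {y}) (W := g y) (p := q + j + 1)
      (r := j + 1) (singleton_subset_iff.2 (hV₁ (mem_inter.1 hy).1))
      (disjoint_singleton_left.2 (hg y))
      (by rw [card_singleton, (mem_powersetCard.1 (hG (hgG y))).2]; omega)
    rwa [card_singleton, show 1 + (j + 1) = j + 2 by omega] at h
  have hXdisj : (↑(B₁ ∩ B₂) : Set α).PairwiseDisjoint X := fun y hy z hz hyz => by
    refine disjoint_left.2 fun A hA hA' => ?_
    have hyA := singleton_subset_iff.1 (mem_filter.1 hA).2.1
    exact disjoint_left.1 (mem_filter.1 hA').2.2 hyA (herase z (mem_inter.1 hz).1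
      (mem_erase.2 ⟨hyz, (mem_inter.1 hy).1⟩))
  have hpair := two_mul_choose_add_card_le_of_card_inter hV hG h₁ h₂ hi
    (X := (B₁ ∩ B₂).biUnion X) fun A hA => by
    obtain ⟨y, hy, hAy⟩ := mem_biUnion.1 hA
    obtain ⟨hAV, hyA, hAg⟩ := mem_filter.1 hAy
    rw [singleton_subset_iff] at hyA
    exact ⟨mem_nonTransversals.2 ⟨hAV, g y, hgG y, hAg⟩,
      not_disjoint_iff.2 ⟨y, hyA, (mem_inter.1 hy).1⟩,
      not_disjoint_iff.2 ⟨y, hyA, (mem_inter.1 hy).2⟩⟩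
  rw [card_biUnion hXdisj] at hpair
  have hXsum : (j + 2) * (q + j + 1).choose (j + 1) ≤ ∑ y ∈ B₁ ∩ B₂, #(X y) := by
    simpa [hi] using card_nsmul_le_sum _ (fun y => #(X y)) _ hXcard
  have hnum := choose_add_two_choose_le q j
  omega

lemma choose_add_choose_le_card_nonTransversals (hV : #V = q + 2 * j + 5)
    (hG : G ⊆ V.powersetCard (j + 3)) (hint : (G : Set (Finset α)).Intersecting)
    (hτ : CoverNumberGT G 1) (h4 : 4 ≤ #G) :
    2 * (q + j + 2).choose (j + 2) + (q + j + 1).choose (j + 1) + q.choose j ≤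
      #(nonTransversals V (j + 2) G) + q.choose (j + 2) := by
  by_cases hall : ∀ A ∈ G, ∀ B ∈ G, A ≠ B → #(A ∩ B) = j + 2
  · obtain ⟨B₁, h₁, B₂, h₂, h₁₂⟩ := one_lt_card.1 (show 1 < #G by omega)
    exact choose_add_choose_le_card_nonTransversals_of_forall_card_inter hV hG hτ hall h₁ h₂ h₁₂
  push Not at hall
  obtain ⟨B₁, h₁, B₂, h₂, h₁₂, hc⟩ := hall
  have hpos := card_pos.2 (not_disjoint_iff_nonempty_inter.1 (hint h₁ h₂))
  have hlt := card_inter_lt_of_ne (mem_powersetCard.1 (hG h₁)).2 (mem_powersetCard.1 (hG h₂)).2 h₁₂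
  obtain hi | ⟨i, hi⟩ : #(B₁ ∩ B₂) = 1 ∨ ∃ i, #(B₁ ∩ B₂) = i + 1 + 1 := by
    by_cases h : #(B₁ ∩ B₂) = 1
    · exact Or.inl h
    · exact Or.inr ⟨#(B₁ ∩ B₂) - 2, by omega⟩
  · exact choose_add_choose_le_card_nonTransversals_of_card_inter_eq_one hV hG hτ h4 h₁ h₂ hi
  have hloss := two_mul_choose_add_sum_le hV hG hτ h₁ h₂ hi (by omega)
  have hshift : ∑ l ∈ range (i + 1), ((q + l).choose (j + 1) + (q + l).choose j) ≤
      ∑ l ∈ range (i + 1), (q + j + 1 - (i + 1) + l).choose (j + 1) :=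
    sum_le_sum fun l _ => by
      rw [add_comm, ← Nat.choose_succ_succ']
      exact Nat.choose_le_choose _ (by omega)
  have hfirst : q.choose j ≤ ∑ l ∈ range (i + 1), (q + l).choose j :=
    single_le_sum (f := fun l => (q + l).choose j) (fun _ _ => Nat.zero_le _)
      (mem_range.2 i.succ_pos)
  have hexpand : (q + (i + 1)).choose (j + 2) =
      q.choose (j + 2) + ∑ l ∈ range (i + 1), (q + l).choose (j + 1) :=
    choose_add_succ_eq_add_sum q (j + 1) (i + 1)
  rw [sum_add_distrib] at hshift
  omega

end Loss

section KruskalKatona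

open scoped FinsetFamily

variable {α : Type*} [DecidableEq α] {V : Finset α}

lemma choose_le_card_iterate_shadow {𝒜 : Finset (Finset α)} {r s i : ℕ}
    (h𝒜 : 𝒜 ⊆ V.powersetCard r) (hir : i ≤ r) (hrs : r ≤ s) (hsV : s ≤ #V)
    (hcard : s.choose r ≤ #𝒜) : s.choose (r - i) ≤ #(∂^[i] 𝒜) := by
  let f : Fin #V ↪ α := V.equivFin.symm.toEmbedding.trans (Function.Embedding.subtype (· ∈ V))
  have himage : ∀ A ∈ 𝒜, ∃ T : Finset (Fin #V), T.map f = A := fun A hA => by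
    have hAf : ↑A ⊆ f '' Set.univ := fun a ha => by
      have haV := (mem_powersetCard.1 (h𝒜 hA)).1 ha
      exact ⟨V.equivFin ⟨a, haV⟩, trivial, by simp [f]⟩
    obtain ⟨T, -, hT⟩ := subset_set_image_iff.1 hAf
    exact ⟨T, by rw [map_eq_image, hT]⟩
  let ℬ : Finset (Finset (Fin #V)) := {T | T.map f ∈ 𝒜}
  have hℬ : 𝒜 ⊆ ℬ.image (map f) := fun A hA => by
    obtain ⟨T, rfl⟩ := himage A hA
    exact mem_image_of_mem _ (mem_filter.2 ⟨mem_univ T, hA⟩)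
  have hsized : (ℬ : Set (Finset (Fin #V))).Sized r := fun T hT => by
    rw [← card_map f, (mem_powersetCard.1 (h𝒜 (mem_filter.1 hT).2)).2]
  refine (kruskal_katona_lovasz_form hir hrs hsV hsized
    (hcard.trans ((card_le_card hℬ).trans card_image_le))).trans ?_
  refine card_le_card_of_injOn (map f) (fun T hT => ?_) (map_injective f).injOn
  obtain ⟨R, hR, hTR, hc⟩ := mem_shadow_iterate_iff_exists_mem_card_add.1 hT
  exact mem_shadow_iterate_iff_exists_mem_card_add.2
    ⟨R.map f, (mem_filter.1 hR).2, map_subset_map.2 hTR, by rw [card_map, card_map, hc]⟩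

/-- Kruskal–Katona in Lovász's form, applied to the complements in `V` of the members of `G`. -/
lemma choose_le_card_nonTransversals_of_choose_le_card {G : Finset (Finset α)} {k s : ℕ}
    (hG : G ⊆ V.powersetCard k) (hsk : s ≤ k) (hk : 1 ≤ k) (hV : 2 * k ≤ #V)
    (hcard : (#V - s).choose (k - s) ≤ #G) :
    (#V - s).choose (k - 1) ≤ #(nonTransversals V (k - 1) G) := by
  have hcompl : ∀ B ∈ G, #(V \ B) = #V - k := fun B hB => by
    rw [card_sdiff_of_subset (mem_powersetCard.1 (hG hB)).1, (mem_powersetCard.1 (hG hB)).2]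
  have hinj : Set.InjOn (V \ ·) (G : Set (Finset α)) := fun A hA B hB hAB => by
    rw [← Finset.sdiff_sdiff_eq_self (mem_powersetCard.1 (hG hA)).1,
      ← Finset.sdiff_sdiff_eq_self (mem_powersetCard.1 (hG hB)).1]
    exact congrArg (V \ ·) hAB
  have hshadow := choose_le_card_iterate_shadow (𝒜 := G.image (V \ ·)) (V := V) (r := #V - k)
    (i := #V - k - (k - 1)) (s := #V - s) (image_subset_iff.2 fun B hB =>
      mem_powersetCard.2 ⟨sdiff_subset, hcompl B hB⟩) (by omega) (by omega) (by omega) (by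
      rwa [card_image_of_injOn hinj, ← Nat.choose_symm (by omega),
        show #V - s - (#V - k) = k - s by omega])
  rw [show #V - k - (#V - k - (k - 1)) = k - 1 by omega] at hshadow
  refine hshadow.trans (card_le_card fun A hA => ?_)
  obtain ⟨T, hT, hAT, hc⟩ := mem_shadow_iterate_iff_exists_mem_card_add.1 hA
  obtain ⟨B, hB, rfl⟩ := mem_image.1 hT
  rw [hcompl B hB] at hc
  exact mem_nonTransversals.2 ⟨mem_powersetCard.2 ⟨hAT.trans sdiff_subset, by omega⟩, B, hB,
    (subset_sdiff.1 hAT).2⟩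

end KruskalKatona

section Compression

open scoped FinsetFamily

variable {α : Type*} [DecidableEq α] {F : Finset (Finset α)} {i j : α}

lemma compress_singleton (A : Finset α) :
    UV.compress {i} {j} A = if i ∉ A ∧ j ∈ A then (insert i A).erase j else A := by
  simp only [UV.compress, disjoint_singleton_left, singleton_subset_iff, sup_eq_union,
    union_singleton, sdiff_singleton_eq_erase]

lemma not_disjoint_of_mem_compression {A B : Finset α} (hF : (F : Set (Finset α)).Intersecting)
    (hA : A ∈ 𝓒 {i} {j} F) (hAF : A ∉ F) (hB : UV.compress {i} {j} B ∈ F) : ¬ Disjoint A B := by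
  have hiA := singleton_subset_iff.1 (UV.le_of_mem_compression_of_notMem hA hAF)
  by_cases hiB : i ∈ B
  · exact not_disjoint_iff.2 ⟨i, hiA, hiB⟩
  obtain ⟨z, hzA, hzB⟩ :=
    not_disjoint_iff.1 (hF (UV.sup_sdiff_mem_of_mem_compression_of_notMem hA hAF) hB)
  rw [compress_singleton] at hzB
  refine not_disjoint_iff.2 ⟨z, ?_⟩
  split_ifs at hzB <;> grind

lemma intersecting_compression (hF : (F : Set (Finset α)).Intersecting) :
    (𝓒 {i} {j} F : Set (Finset α)).Intersecting := by
  intro A hA B hB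
  by_cases hAF : A ∈ F <;> by_cases hBF : B ∈ F
  · exact hF hAF hBF
  · exact fun h => not_disjoint_of_mem_compression hF hB hBF
      ((UV.mem_compression.1 hA).resolve_right fun h => h.1 hAF).2 h.symm
  · exact not_disjoint_of_mem_compression hF hA hAF
      ((UV.mem_compression.1 hB).resolve_right fun h => h.1 hBF).2
  · exact not_disjoint_iff.2 ⟨i, singleton_subset_iff.1 (UV.le_of_mem_compression_of_notMem hA hAF),
      singleton_subset_iff.1 (UV.le_of_mem_compression_of_notMem hB hBF)⟩

lemma compression_subset_powersetCard {V : Finset α} {k : ℕ} (hF : F ⊆ V.powersetCard k)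
    (hi : i ∈ V) : 𝓒 {i} {j} F ⊆ V.powersetCard k := by
  intro A hA
  obtain ⟨hAF, -⟩ | ⟨-, B, hB, rfl⟩ := UV.mem_compression.1 hA
  · exact hF hAF
  obtain ⟨hBV, hBk⟩ := mem_powersetCard.1 (hF hB)
  refine mem_powersetCard.2 ⟨?_, by rw [UV.card_compress (by simp), hBk]⟩
  rw [compress_singleton]
  split_ifs
  exacts [(erase_subset j _).trans (insert_subset hi hBV), hBV]

/-- A cover of the compressed family together with `j` covers `F`, as compression fixes the sets
avoiding `j`. -/
lemma coverNumberGT_compression {t : ℕ} (hF : CoverNumberGT F (t + 1)) :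
    CoverNumberGT (𝓒 {i} {j} F) t := by
  intro S hS
  obtain ⟨A, hA, hAS⟩ := hF (insert j S) ((card_insert_le j S).trans (by omega))
  rw [disjoint_insert_right] at hAS
  have hfix : UV.compress {i} {j} A = A := by rw [compress_singleton, if_neg (by tauto)]
  exact ⟨A, UV.mem_compression.2 (Or.inl ⟨hA, hfix.symm ▸ hA⟩), hAS.2⟩

lemma exists_card_le_mul_card_memberSubfamily {s : ℕ} (hF : F.Nonempty)
    (hs : ¬ CoverNumberGT F s) : ∃ x, #F ≤ s * #(F.memberSubfamily x) := by
  simp only [CoverNumberGT, not_forall, not_exists, not_and] at hs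
  obtain ⟨S, hS, hcover⟩ := hs
  have hunion : F ⊆ S.biUnion fun x => {A ∈ F | x ∈ A} := fun A hA => by
    obtain ⟨x, hxA, hxS⟩ := not_disjoint_iff.1 (hcover A hA)
    exact mem_biUnion.2 ⟨x, hxS, mem_filter.2 ⟨hA, hxA⟩⟩
  have hSne : S.Nonempty := by
    obtain ⟨A, hA⟩ := hF
    obtain ⟨x, -, hx⟩ := not_disjoint_iff.1 (hcover A hA)
    exact ⟨x, hx⟩
  obtain ⟨x, -, hx⟩ := exists_max_image S (fun x => #{A ∈ F | x ∈ A}) hSne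
  refine ⟨x, (card_le_card hunion).trans ((card_biUnion_le_card_mul _ _ _ hx).trans ?_)⟩
  rw [card_memberSubfamily]
  exact Nat.mul_le_mul_right _ hS

lemma sum_sum_compression_lt {F : Finset (Finset ℕ)} {i j : ℕ} (hij : i < j)
    (h : 𝓒 {i} {j} F ≠ F) : ∑ A ∈ 𝓒 {i} {j} F, ∑ a ∈ A, a < ∑ A ∈ F, ∑ a ∈ A, a := by
  have hmoved : ∀ A ∈ {A ∈ F | UV.compress {i} {j} A ∉ F},
      ∑ a ∈ UV.compress {i} {j} A, a < ∑ a ∈ A, a := fun A hA => by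
    rw [mem_filter, compress_singleton] at hA
    rw [compress_singleton]
    split_ifs at hA ⊢ with hiA
    · have hi := sum_insert (f := fun a => a) hiA.1
      have hj := add_sum_erase (insert i A) (fun a => a) (mem_insert_of_mem hiA.2)
      omega
    · exact absurd hA.1 hA.2
  have hne : {A ∈ F | UV.compress {i} {j} A ∉ F}.Nonempty := by
    by_contra hempty
    rw [not_nonempty_iff_eq_empty, filter_eq_empty_iff] at hempty
    exact h (eq_of_superset_of_card_ge (fun A hA => UV.mem_compression.2
      (Or.inl ⟨hA, not_not.1 (hempty hA)⟩)) (UV.card_compression _ _ _).le)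
  rw [UV.compression, sum_union UV.compress_disjoint, filter_image, sum_image UV.compress_injOn,
    ← sum_filter_add_sum_filter_not F (fun A => UV.compress {i} {j} A ∈ F)]
  exact Nat.add_lt_add_left (sum_lt_sum_of_nonempty hne hmoved) _

end Compression

section Shifted

open scoped FinsetFamily

variable {n k i j s t : ℕ} {A B C : Finset ℕ} {F : Finset (Finset ℕ)}

/-- `F` is left-shifted on `{1, …, n}`: replacing an element of a member by a smaller positive one
outside it gives a member again. -/
def IsShifted (n : ℕ) (F : Finset (Finset ℕ)) : Prop :=
  ∀ i ∈ Icc 1 n, ∀ j, i < j → UV.IsCompressed {i} {j} F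

lemma IsShifted.erase_insert_mem (hF : IsShifted n F) (hA : A ∈ F) (hi : i ∈ Icc 1 n)
    (hij : i < j) (hiA : i ∉ A) (hjA : j ∈ A) : (insert i A).erase j ∈ F := by
  have h := UV.compress_mem_compression (u := {i}) (v := {j}) hA
  rwa [(hF i hi j hij).eq, compress_singleton, if_pos ⟨hiA, hjA⟩] at h

lemma IsShifted.exists_subset (hF : IsShifted n F) (hC : C ⊆ Icc 1 n) (d : ℕ) :
    ∀ A ∈ F, #(A \ C) = d → (∀ t, #{a ∈ A | a ≤ t} ≤ #{c ∈ C | c ≤ t}) → ∃ B ∈ F, B ⊆ C := by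
  induction d with
  | zero => exact fun A hA hd _ => ⟨A, hA, by simpa using hd⟩
  | succ d ih =>
    intro A hA hd hdom
    have hne : (A \ C).Nonempty := card_pos.1 (by omega)
    obtain ⟨hjA, hjC⟩ := mem_sdiff.1 (min'_mem _ hne)
    set j := (A \ C).min' hne
    have hprefix : ∀ t < j, {a ∈ A | a ≤ t} ⊆ {c ∈ C | c ≤ t} := fun t ht a ha => by
      obtain ⟨haA, hat⟩ := mem_filter.1 ha
      refine mem_filter.2 ⟨by_contra fun haC => ?_, hat⟩
      have := min'_le (A \ C) a (mem_sdiff.2 ⟨haA, haC⟩)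
      omega
    obtain ⟨i, hi, hiA⟩ : ∃ i ∈ {c ∈ C | c ≤ j}, i ∉ A := by
      by_contra! hsub
      have hss : {c ∈ C | c ≤ j} ⊂ {a ∈ A | a ≤ j} := (ssubset_iff_of_subset fun c hc =>
        mem_filter.2 ⟨hsub c hc, (mem_filter.1 hc).2⟩).2
          ⟨j, mem_filter.2 ⟨hjA, le_rfl⟩, fun h => hjC (mem_filter.1 h).1⟩
      exact (card_lt_card hss).not_ge (hdom j)
    obtain ⟨hiC, hij⟩ := mem_filter.1 hi
    have hij : i < j := lt_of_le_of_ne hij fun h => hjC (h ▸ hiC)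
    refine ih _ (hF.erase_insert_mem hA (hC hiC) hij hiA hjA) ?_ fun t => ?_
    · rw [show (insert i A).erase j \ C = (A \ C).erase j by grind,
        card_erase_of_mem (mem_sdiff.2 ⟨hjA, hjC⟩), hd, Nat.add_sub_cancel]
    · obtain htj | hjt := lt_or_ge t j
      · refine card_le_card fun a ha => ?_
        have := hprefix t htj
        grind
      · refine le_trans ?_ (hdom t)
        have hsub : {a ∈ (insert i A).erase j | a ≤ t} ⊆ (insert i {a ∈ A | a ≤ t}).erase j := by
          grind
        have := card_le_card hsub
        rw [card_erase_of_mem (by grind), card_insert_of_notMem (by grind)] at this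
        exact this

lemma card_filter_le_symmDiff_of_le (hA : A ⊆ Icc 1 n) (hst : s ≤ t) :
    #{a ∈ symmDiff A (Icc 1 t) | a ≤ s} + #{a ∈ A | a ≤ s} = s := by
  have h : {a ∈ symmDiff A (Icc 1 t) | a ≤ s} = Icc 1 s \ {a ∈ A | a ≤ s} := by
    ext a
    have := @hA a
    simp only [mem_filter, mem_symmDiff, mem_Icc, mem_sdiff] at this ⊢
    grind
  rw [h, card_sdiff_add_card_eq_card fun a ha => ?_, Nat.card_Icc, Nat.add_sub_cancel]
  have := mem_Icc.1 (hA (mem_filter.1 ha).1)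
  exact mem_Icc.2 ⟨this.1, (mem_filter.1 ha).2⟩

lemma card_filter_le_add_card_filter_Ioc (A : Finset ℕ) (hts : t ≤ s) :
    #{a ∈ A | a ≤ s} = #{a ∈ A | a ≤ t} + #{a ∈ A | t < a ∧ a ≤ s} := by
  rw [← card_union_of_disjoint (disjoint_filter.2 fun a _ h h' => by omega), ← filter_or]
  congr 1
  ext a
  grind

lemma card_filter_le_symmDiff_of_ge (hA : A ⊆ Icc 1 n) (ht : 2 * #{a ∈ A | a ≤ t} = t)
    (hts : t ≤ s) : #{a ∈ symmDiff A (Icc 1 t) | a ≤ s} = #{a ∈ A | a ≤ s} := by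
  have h := card_filter_le_symmDiff_of_le hA (le_refl t)
  rw [card_filter_le_add_card_filter_Ioc _ hts, card_filter_le_add_card_filter_Ioc A hts]
  have hsame : {a ∈ symmDiff A (Icc 1 t) | t < a ∧ a ≤ s} = {a ∈ A | t < a ∧ a ≤ s} := by
    ext a
    simp only [mem_filter, mem_symmDiff, mem_Icc]
    grind
  rw [hsame]
  omega

/-- `t` is the first positive time at which half of `{1, …, t}` lies in `A`. -/
def IsFirstHalf (A : Finset ℕ) (t : ℕ) : Prop :=
  1 ≤ t ∧ 2 * #{a ∈ A | a ≤ t} = t ∧ ∀ s, 1 ≤ s → s < t → 2 * #{a ∈ A | a ≤ s} < s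

lemma card_filter_le_succ_le (A : Finset ℕ) (t : ℕ) :
    #{a ∈ A | a ≤ t + 1} ≤ #{a ∈ A | a ≤ t} + 1 := by
  refine (card_le_card (t := insert (t + 1) {a ∈ A | a ≤ t}) fun a ha => ?_).trans
    (card_insert_le _ _)
  grind

/-- If `A` never contained half of `{1, …, t}`, then its complement would dominate it, and a
member of `F` inside this complement would be disjoint from `A`. -/
lemma IsShifted.exists_isFirstHalf (hF : IsShifted n F) (hFn : ∀ A ∈ F, A ⊆ Icc 1 n)
    (hint : (F : Set (Finset ℕ)).Intersecting) (hA : A ∈ F) (h1 : 1 ∉ A) :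
    ∃ t, IsFirstHalf A t := by
  have hex : ∃ t, 1 ≤ t ∧ t ≤ 2 * #{a ∈ A | a ≤ t} := by
    by_contra! hlt
    have hdom : ∀ t ≤ n, #{a ∈ A | a ≤ t} ≤ #{a ∈ symmDiff A (Icc 1 n) | a ≤ t} := fun t ht => by
      have := card_filter_le_symmDiff_of_le (hFn A hA) ht
      have := hlt t
      omega
    obtain ⟨B, hB, hBA⟩ := hF.exists_subset (C := symmDiff A (Icc 1 n))
      (fun a ha => by have := @hFn A hA a; grind [mem_symmDiff]) _ A hA rfl fun t => by
        obtain htn | hnt := le_total t n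
        · exact hdom t htn
        · have hAt : {a ∈ A | a ≤ t} = {a ∈ A | a ≤ n} := filter_congr fun a ha => by
            have := mem_Icc.1 (hFn A hA ha)
            omega
          rw [hAt]
          exact (hdom n le_rfl).trans (card_le_card (monotone_filter_right _ fun a _ h =>
            h.trans hnt))
    obtain ⟨z, hzA, hzB⟩ := not_disjoint_iff.1 (hint hA hB)
    have := mem_symmDiff.1 (hBA hzB)
    have := hFn A hA hzA
    tauto
  obtain ⟨ht1, ht⟩ := Nat.find_spec hex
  have hfirst : ∀ s, 1 ≤ s → s < Nat.find hex → 2 * #{a ∈ A | a ≤ s} < s := fun s hs hst =>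
    not_le.1 fun h => Nat.find_min hex hst ⟨hs, h⟩
  refine ⟨Nat.find hex, ht1, ?_, hfirst⟩
  obtain ⟨s, hs⟩ := Nat.exists_eq_add_of_le' ht1
  rw [hs] at ht hfirst ⊢
  have hstep := card_filter_le_succ_le A s
  obtain rfl | hs0 := Nat.eq_zero_or_pos s
  · have hA1 : {a ∈ A | a ≤ 0 + 1} = ∅ := filter_eq_empty_iff.2 fun a ha ha1 => by
      have := mem_Icc.1 (hFn A hA ha)
      exact h1 (by rwa [show a = 1 by omega] at ha)
    simp [hA1] at ht
  · have := hfirst s hs0 (by omega)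
    omega

lemma IsFirstHalf.two_mul_card_filter_le (ht : IsFirstHalf A t) (hs : 1 ≤ s) (hst : s ≤ t) :
    2 * #{a ∈ A | a ≤ s} ≤ s := by
  obtain rfl | hst := hst.eq_or_lt
  exacts [ht.2.1.le, (ht.2.2 s hs hst).le]

lemma IsFirstHalf.symmDiff_mem (ht : IsFirstHalf A t) (hF : IsShifted n F)
    (hFn : F ⊆ (Icc 1 n).powersetCard k) (hA : A ∈ F) : symmDiff A (Icc 1 t) ∈ F := by
  obtain ⟨hAn, hAk⟩ := mem_powersetCard.1 (hFn hA)
  have hdom : ∀ s, #{a ∈ A | a ≤ s} ≤ #{a ∈ symmDiff A (Icc 1 t) | a ≤ s} := fun s => by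
    obtain hst | hts := le_total s t
    · have := card_filter_le_symmDiff_of_le hAn hst
      have := ht.two_mul_card_filter_le (s := s)
      omega
    · exact (card_filter_le_symmDiff_of_ge hAn ht.2.1 hts).ge
  have htn : t ≤ n := by
    by_contra! hnt
    have hsame : {a ∈ A | a ≤ n} = {a ∈ A | a ≤ t} := filter_congr fun a ha => by
      have := mem_Icc.1 (hAn ha)
      omega
    have hn := card_filter_le_symmDiff_of_le hAn hnt.le
    have hlt := ht.2.2 n
    rw [hsame] at hn hlt
    have := ht.1
    have := ht.2.1
    omega
  have hsub : symmDiff A (Icc 1 t) ⊆ Icc 1 n := fun a ha => by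
    have := @hAn a
    grind [mem_symmDiff]
  have hcard := card_filter_le_symmDiff_of_ge hAn ht.2.1 htn
  rw [filter_true_of_mem fun a ha => (mem_Icc.1 (hsub ha)).2,
    filter_true_of_mem fun a ha => (mem_Icc.1 (hAn ha)).2] at hcard
  obtain ⟨B, hB, hBA⟩ := hF.exists_subset hsub _ A hA rfl hdom
  rwa [← eq_of_subset_of_card_le hBA (by rw [hcard, hAk, (mem_powersetCard.1 (hFn hB)).2])]

lemma IsFirstHalf.le_of_symmDiff_eq {u : ℕ} (ht : IsFirstHalf A t) (hu : IsFirstHalf B u)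
    (hA : A ⊆ Icc 1 n) (hB : B ⊆ Icc 1 n) (h : symmDiff A (Icc 1 t) = symmDiff B (Icc 1 u)) :
    t ≤ u := by
  by_contra! hut
  have h₁ := card_filter_le_symmDiff_of_le hA hut.le
  have h₂ := card_filter_le_symmDiff_of_le hB (le_refl u)
  rw [h] at h₁
  have := hu.2.1
  have := ht.2.2 u hu.1 hut
  omega

lemma IsShifted.card_nonMemberSubfamily_le (hF : IsShifted n F)
    (hFn : F ⊆ (Icc 1 n).powersetCard k) (hint : (F : Set (Finset ℕ)).Intersecting) :
    #(F.nonMemberSubfamily 1) ≤ #(F.memberSubfamily 1) := by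
  have hAn : ∀ A ∈ F, A ⊆ Icc 1 n := fun A hA => (mem_powersetCard.1 (hFn hA)).1
  have hex : ∀ A ∈ F.nonMemberSubfamily 1, ∃ t, IsFirstHalf A t := fun A hA =>
    hF.exists_isFirstHalf hAn hint (mem_nonMemberSubfamily.1 hA).1 (mem_nonMemberSubfamily.1 hA).2
  choose! t ht using hex
  rw [card_memberSubfamily]
  refine card_le_card_of_injOn (fun A => symmDiff A (Icc 1 (t A))) (fun A hA => ?_)
    fun A hA B hB h => ?_
  · obtain ⟨hAF, h1⟩ := mem_nonMemberSubfamily.1 hA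
    exact mem_filter.2 ⟨(ht A hA).symmDiff_mem hF hFn hAF, mem_symmDiff.2
      (Or.inr ⟨mem_Icc.2 ⟨le_rfl, (ht A hA).1⟩, h1⟩)⟩
  · have hA' := hAn A (mem_nonMemberSubfamily.1 hA).1
    have hB' := hAn B (mem_nonMemberSubfamily.1 hB).1
    have htAB : t A = t B := le_antisymm ((ht A hA).le_of_symmDiff_eq (ht B hB) hA' hB' h)
      ((ht B hB).le_of_symmDiff_eq (ht A hA) hB' hA' h.symm)
    simp only [htAB] at h
    exact symmDiff_left_injective _ h

/-- Among the families of the given size choose one with the least total sum of elements: either it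
has a cover of size three, or its compressions still have covering number at least three, so that
by minimality it is shifted. -/
lemma exists_isCoverThree_card_le_three_mul (hF : IsCoverThree (Icc 1 n) k F) :
    ∃ F', IsCoverThree (Icc 1 n) k F' ∧ #F' = #F ∧
      ∃ x ∈ Icc 1 n, #F' ≤ 3 * #(F'.memberSubfamily x) := by
  classical
  obtain ⟨F', hF', hmin⟩ := exists_min_image
    {F' ∈ ((Icc 1 n).powersetCard k).powerset | IsCoverThree (Icc 1 n) k F' ∧ #F' = #F}
    (fun F' => ∑ A ∈ F', ∑ a ∈ A, a) ⟨F, mem_filter.2 ⟨mem_powerset.2 hF.subset, hF, rfl⟩⟩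
  obtain ⟨-, hF', hcard⟩ := mem_filter.1 hF'
  refine ⟨F', hF', hcard, ?_⟩
  have hne : F'.Nonempty := (hF'.coverNumberGT ∅ (by simp)).imp fun _ h => h.1
  have hx : ∃ x, #F' ≤ 3 * #(F'.memberSubfamily x) := by
    by_cases hτ : CoverNumberGT F' 3
    · refine ⟨1, ?_⟩
      have hshift : IsShifted n F' := fun i hi j hij => by
        by_contra hne
        refine (sum_sum_compression_lt hij hne).not_ge (hmin _ (mem_filter.2 ?_))
        have hsub := compression_subset_powersetCard (j := j) hF'.subset hi
        exact ⟨mem_powerset.2 hsub, ⟨hsub, intersecting_compression hF'.intersecting,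
          coverNumberGT_compression hτ⟩, by rw [UV.card_compression, hcard]⟩
      have hle := hshift.card_nonMemberSubfamily_le hF'.subset hF'.intersecting
      have := card_memberSubfamily_add_card_nonMemberSubfamily 1 F'
      omega
    · exact exists_card_le_mul_card_memberSubfamily hne hτ
  obtain ⟨x, hx⟩ := hx
  refine ⟨x, ?_, hx⟩
  obtain ⟨A, hA⟩ : (F'.memberSubfamily x).Nonempty := card_pos.1 (by
    have := hne.card_pos
    omega)
  exact (mem_powersetCard.1 (hF'.subset (mem_memberSubfamily.1 hA).1)).1 (mem_insert_self x A)

end Shifted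

section Transversals

variable {α : Type*} [DecidableEq α] {V W : Finset α} {F G : Finset (Finset α)} {k r s : ℕ}

lemma card_transversals_mul_choose_le (hWV : W ⊆ V) :
    #(transversals W s G) * (#V - #W).choose r ≤ #(transversals V (s + r) G) := by
  rw [← card_sdiff_of_subset hWV, ← card_powersetCard, ← card_product]
  refine card_le_card_of_injOn (fun p => p.1 ∪ p.2) ?_
    (Set.LeftInvOn.injOn (f₁' := fun A => (A ∩ W, A \ W)) ?_)
  · rintro ⟨Q, R⟩ hQR
    obtain ⟨hQ, hR⟩ := mem_product.1 hQR
    rw [mem_transversals, mem_powersetCard] at hQ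
    rw [mem_powersetCard] at hR
    rw [mem_coe, mem_transversals, mem_powersetCard,
      card_union_of_disjoint (disjoint_sdiff.mono hQ.1.1 hR.1), hQ.1.2, hR.2]
    exact ⟨⟨union_subset (hQ.1.1.trans hWV) (hR.1.trans sdiff_subset), rfl⟩,
      fun B hB hd => hQ.2 B hB (hd.mono_left subset_union_left)⟩
  · rintro ⟨Q, R⟩ hQR
    obtain ⟨hQ, hR⟩ := mem_product.1 hQR
    have hQW := (mem_powersetCard.1 (mem_transversals.1 hQ).1).1
    have hRW : Disjoint R W := (subset_sdiff.1 (mem_powersetCard.1 hR).1).2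
    refine Prod.ext ?_ ?_
    · change (Q ∪ R) ∩ W = Q
      rw [union_inter_distrib_right, inter_eq_left.2 hQW, disjoint_iff_inter_eq_empty.1 hRW,
        union_empty]
    · change (Q ∪ R) \ W = R
      rw [union_sdiff_distrib, sdiff_eq_empty_iff_subset.2 hQW, sdiff_eq_self_of_disjoint hRW,
        empty_union]

lemma memberSubfamily_subset_transversals (hF : F ⊆ V.powersetCard k)
    (hint : (F : Set (Finset α)).Intersecting) (x : α) :
    F.memberSubfamily x ⊆ transversals (V.erase x) (k - 1) (F.nonMemberSubfamily x) := by
  intro A hA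
  obtain ⟨hAF, hxA⟩ := mem_memberSubfamily.1 hA
  obtain ⟨hAV, hAk⟩ := mem_powersetCard.1 (hF hAF)
  rw [card_insert_of_notMem hxA] at hAk
  rw [mem_transversals, mem_powersetCard]
  refine ⟨⟨subset_erase.2 ⟨(subset_insert x A).trans hAV, hxA⟩, by omega⟩, fun B hB hd => ?_⟩
  obtain ⟨hBF, hxB⟩ := mem_nonMemberSubfamily.1 hB
  exact hint hAF hBF (disjoint_insert_left.2 ⟨hxB, hd⟩)

lemma nonMemberSubfamily_subset_powersetCard_erase (hF : F ⊆ V.powersetCard k) (x : α) :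
    F.nonMemberSubfamily x ⊆ (V.erase x).powersetCard k := by
  intro A hA
  obtain ⟨hAF, hxA⟩ := mem_nonMemberSubfamily.1 hA
  obtain ⟨hAV, hAk⟩ := mem_powersetCard.1 (hF hAF)
  exact mem_powersetCard.2 ⟨subset_erase.2 ⟨hAV, hxA⟩, hAk⟩

lemma card_memberSubfamily_add_card_nonTransversals_le {x : α} (hF : F ⊆ V.powersetCard k)
    (hint : (F : Set (Finset α)).Intersecting) (hx : x ∈ V) :
    #(F.memberSubfamily x) + #(nonTransversals (V.erase x) (k - 1) (F.nonMemberSubfamily x)) ≤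
      (#V - 1).choose (k - 1) := by
  rw [← card_erase_of_mem hx, ← card_transversals_add_card_nonTransversals (V.erase x) (k - 1)
    (F.nonMemberSubfamily x)]
  exact Nat.add_le_add_right (card_le_card (memberSubfamily_subset_transversals hF hint x)) _

end Transversals

section ExtremalFamily

variable {n k : ℕ}

lemma mem_T2fam {B : Finset ℕ} : B ∈ T2fam k ↔ B = Icc 2 (k + 1) ∨
    B = insert 2 (Icc (k + 2) (2 * k)) ∨ B = insert 3 (Icc (k + 2) (2 * k)) := by
  simp only [T2fam, mem_insert, mem_singleton]

lemma card_T2fam (hk : 3 ≤ k) : #(T2fam k) = 3 := by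
  have h2 : 2 ∉ insert 3 (Icc (k + 2) (2 * k)) := by simp
  have h3 : 3 ∉ insert 2 (Icc (k + 2) (2 * k)) := by simp; omega
  refine card_eq_three.2 ⟨_, _, _, fun h => h3 ?_, fun h => h2 ?_, fun h => h2 ?_, rfl⟩
  · rw [← h, mem_Icc]; omega
  · rw [← h, mem_Icc]; omega
  · rw [← h]; exact mem_insert_self _ _

lemma T2fam_subset_powersetCard (hk : 3 ≤ k) (hn : 2 * k ≤ n) :
    T2fam k ⊆ (Icc 2 n).powersetCard k := by
  intro B hB
  rw [mem_powersetCard]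
  obtain rfl | rfl | rfl := mem_T2fam.1 hB
  · exact ⟨Icc_subset_Icc_right (by omega), by simp⟩
  · refine ⟨insert_subset (by simp; omega) (Icc_subset_Icc (by omega) hn), ?_⟩
    rw [card_insert_of_notMem (by simp), Nat.card_Icc]; omega
  · refine ⟨insert_subset (by simp; omega) (Icc_subset_Icc (by omega) hn), ?_⟩
    rw [card_insert_of_notMem (by simp; omega), Nat.card_Icc]; omega

lemma intersecting_T2fam (hk : 3 ≤ k) : (T2fam k : Set (Finset ℕ)).Intersecting := by
  intro A hA B hB
  rw [not_disjoint_iff]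
  obtain rfl | rfl | rfl := mem_T2fam.1 hA <;> obtain rfl | rfl | rfl := mem_T2fam.1 hB
  · exact ⟨2, by simp; omega⟩
  · exact ⟨2, by simp; omega⟩
  · exact ⟨3, by simp; omega⟩
  · exact ⟨2, by simp; omega⟩
  · exact ⟨2, by simp⟩
  · exact ⟨2 * k, by simp; omega⟩
  · exact ⟨3, by simp; omega⟩
  · exact ⟨2 * k, by simp; omega⟩
  · exact ⟨3, by simp⟩

lemma coverNumberGT_T2fam (hk : 3 ≤ k) : CoverNumberGT (T2fam k) 1 := by
  intro S hS
  obtain ⟨y, hy⟩ := card_le_one_iff_subset_singleton.1 hS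
  suffices ∃ B ∈ T2fam k, y ∉ B from
    this.imp fun B hB => ⟨hB.1, (disjoint_singleton_right.2 hB.2).mono_right hy⟩
  by_cases hy2 : y = 2
  · exact ⟨_, mem_T2fam.2 (.inr (.inr rfl)), by simp; omega⟩
  by_cases hyI : y ∈ Icc (k + 2) (2 * k)
  · exact ⟨_, mem_T2fam.2 (.inl rfl), by simp at hyI ⊢; omega⟩
  · exact ⟨_, mem_T2fam.2 (.inr (.inl rfl)), by simp at hyI ⊢; omega⟩

lemma not_disjoint_pair_of_mem_T2fam {a b : ℕ} {B : Finset ℕ} (ha : a ∈ Icc 2 (k + 1))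
    (hb : b ∈ Icc (k + 2) (2 * k)) (hB : B ∈ T2fam k) : ¬ Disjoint {a, b} B := by
  rw [not_disjoint_iff]
  obtain rfl | rfl | rfl := mem_T2fam.1 hB
  · exact ⟨a, by simp, ha⟩
  · exact ⟨b, by simp, mem_insert_of_mem hb⟩
  · exact ⟨b, by simp, mem_insert_of_mem hb⟩

lemma not_disjoint_two_three_of_mem_T2fam {B : Finset ℕ} (hk : 1 ≤ k) (hB : B ∈ T2fam k) :
    ¬ Disjoint {2, 3} B := by
  rw [not_disjoint_iff]
  obtain rfl | rfl | rfl := mem_T2fam.1 hB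
  · exact ⟨2, by simp, by simp; omega⟩
  · exact ⟨2, by simp, by simp⟩
  · exact ⟨3, by simp, by simp⟩

lemma insert_one_mem_C3fam (hk : 1 ≤ k) (hn : 1 ≤ n) {A : Finset ℕ}
    (hA : A ∈ transversals (Icc 2 n) (k - 1) (T2fam k)) : insert 1 A ∈ C3fam n k := by
  obtain ⟨hAk, hAT⟩ := mem_transversals.1 hA
  obtain ⟨hAn, hAc⟩ := mem_powersetCard.1 hAk
  have h1A : 1 ∉ A := fun h => by simpa using hAn h
  refine mem_union_right _ (mem_filter.2 ⟨mem_powersetCard.2 ⟨insert_subset (by simp; omega)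
    (hAn.trans (Icc_subset_Icc_left (by omega))), ?_⟩, mem_insert_self _ _, fun B hB => ?_⟩)
  · rw [card_insert_of_notMem h1A, hAc]; omega
  · exact (not_disjoint_iff_nonempty_inter.1 (hAT B hB)).mono
      (inter_subset_inter_right (subset_insert _ _))

lemma C3fam_subset_powersetCard (hk : 3 ≤ k) (hn : 2 * k ≤ n) :
    C3fam n k ⊆ (Icc 1 n).powersetCard k :=
  union_subset ((T2fam_subset_powersetCard hk hn).trans
    (powersetCard_mono (Icc_subset_Icc_left (by omega)))) (filter_subset _ _)

lemma intersecting_C3fam (hk : 3 ≤ k) : (C3fam n k : Set (Finset ℕ)).Intersecting := by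
  intro A hA B hB
  rw [mem_coe, C3fam, mem_union, mem_filter] at hA hB
  obtain hA | ⟨-, h1A, hAT⟩ := hA <;> obtain hB | ⟨-, h1B, hBT⟩ := hB
  · exact intersecting_T2fam hk hA hB
  · rw [disjoint_comm, not_disjoint_iff_nonempty_inter]
    exact hBT A hA
  · rw [not_disjoint_iff_nonempty_inter]
    exact hAT B hB
  · exact not_disjoint_iff.2 ⟨1, h1A, h1B⟩

lemma exists_pair_transversal_T2fam (hk : 3 ≤ k) (hn : 2 * k ≤ n) {S : Finset ℕ} (hS : #S ≤ 2) :
    ∃ Q ∈ transversals (Icc 2 n) 2 (T2fam k), Disjoint Q S := by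
  by_cases hI : Icc (k + 2) (2 * k) ⊆ S
  · have hIS : Icc (k + 2) (2 * k) = S := eq_of_subset_of_card_le hI (by simp; omega)
    refine ⟨{2, 3}, mem_transversals.2 ⟨mem_powersetCard.2 ⟨?_, rfl⟩, fun B hB =>
      not_disjoint_two_three_of_mem_T2fam (by omega) hB⟩, ?_⟩
    · simp only [insert_subset_iff, singleton_subset_iff, mem_Icc]; omega
    · simp only [← hIS, disjoint_insert_left, disjoint_singleton_left, mem_Icc]; omega
  · have hJ : ¬ Icc 2 (k + 1) ⊆ S := fun h => by
      have := card_le_card h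
      rw [Nat.card_Icc] at this; omega
    obtain ⟨b, hb, hbS⟩ := not_subset.1 hI
    obtain ⟨a, ha, haS⟩ := not_subset.1 hJ
    refine ⟨{a, b}, mem_transversals.2 ⟨mem_powersetCard.2 ⟨?_, card_pair ?_⟩, fun B hB =>
      not_disjoint_pair_of_mem_T2fam ha hb hB⟩, by simp [haS, hbS]⟩
    · simp only [insert_subset_iff, singleton_subset_iff, mem_Icc] at ha hb ⊢; omega
    · rw [mem_Icc] at ha hb; omega

lemma coverNumberGT_C3fam (hk : 3 ≤ k) (hn : 2 * k ≤ n) : CoverNumberGT (C3fam n k) 2 := by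
  intro S hS
  by_cases h1 : 1 ∈ S
  · obtain ⟨B, hB, hBS⟩ := coverNumberGT_T2fam hk (S.erase 1) (by
      rw [card_erase_of_mem h1]; omega)
    refine ⟨B, mem_union_left _ hB, ?_⟩
    rw [← insert_erase h1, disjoint_insert_right]
    exact ⟨fun h => by
      simpa using (mem_powersetCard.1 (T2fam_subset_powersetCard hk hn hB)).1 h, hBS⟩
  · obtain ⟨Q, hQ, hQS⟩ := exists_pair_transversal_T2fam hk hn hS
    obtain ⟨hQc, hQT⟩ := mem_transversals.1 hQ
    obtain ⟨hQn, hQ2⟩ := mem_powersetCard.1 hQc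
    have hroom : k - 1 ≤ #(Icc 2 n \ S) := by
      have := le_card_sdiff S (Icc 2 n)
      rw [Nat.card_Icc] at this; omega
    obtain ⟨R, hQR, hRS, hRc⟩ := exists_subsuperset_card_eq (subset_sdiff.2 ⟨hQn, hQS⟩)
      (by omega) hroom
    obtain ⟨hRn, hRS⟩ := subset_sdiff.1 hRS
    refine ⟨insert 1 R, insert_one_mem_C3fam (by omega) (by omega) (mem_transversals.2
      ⟨mem_powersetCard.2 ⟨hRn, hRc⟩, fun B hB hd => hQT B hB (hd.mono_left hQR)⟩),
      disjoint_insert_left.2 ⟨h1, hRS⟩⟩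

lemma isCoverThree_C3fam (hk : 3 ≤ k) (hn : 2 * k ≤ n) : IsCoverThree (Icc 1 n) k (C3fam n k) :=
  ⟨C3fam_subset_powersetCard hk hn, intersecting_C3fam hk, coverNumberGT_C3fam hk hn⟩

lemma card_transversals_T2fam_add_three_le (hk : 3 ≤ k) (hn : 2 * k ≤ n) :
    #(transversals (Icc 2 n) (k - 1) (T2fam k)) + 3 ≤ #(C3fam n k) := by
  have hA {A : Finset ℕ} {r : ℕ} (h : A ∈ (Icc 2 n).powersetCard r) : 1 ∉ A := fun h₁ => by
    simpa using (mem_powersetCard.1 h).1 h₁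
  have hdisj :
      Disjoint ((transversals (Icc 2 n) (k - 1) (T2fam k)).image (insert 1)) (T2fam k) := by
    rw [disjoint_left]
    intro A hAi hAT
    obtain ⟨A, -, rfl⟩ := mem_image.1 hAi
    exact hA (T2fam_subset_powersetCard hk hn hAT) (mem_insert_self _ _)
  have himg : #((transversals (Icc 2 n) (k - 1) (T2fam k)).image (insert 1)) =
      #(transversals (Icc 2 n) (k - 1) (T2fam k)) :=
    card_image_of_injOn ((insert_erase_invOn.2.injOn).mono fun A h =>
      hA (mem_transversals.1 h).1)
  rw [← card_T2fam hk, ← himg, ← card_union_of_disjoint hdisj]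
  refine card_le_card (union_subset (image_subset_iff.2 fun A h =>
    insert_one_mem_C3fam (by omega) (by omega) h) subset_union_left)

lemma mul_add_one_le_card_transversals_T2fam {u v : ℕ} (hu : 2 ≤ u) (huk : u ≤ k) (hvk : v < k) :
    u * v + 1 ≤
      #(transversals (Icc 2 (u + 1) ∪ Icc (k + 2) (k + 1 + v)) 2 (T2fam k)) := by
  set X := Icc 2 (u + 1)
  set Y := Icc (k + 2) (k + 1 + v)
  have hX {a : ℕ} (ha : a ∈ X) : a ∈ Icc 2 (k + 1) := Icc_subset_Icc_right (by omega) ha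
  have hY {b : ℕ} (hb : b ∈ Y) : b ∈ Icc (k + 2) (2 * k) := Icc_subset_Icc_right (by omega) hb
  have hlt {a b : ℕ} (ha : a ∈ X) (hb : b ∈ Y) : a < b := by
    rw [mem_Icc] at ha hb; omega
  set pairs := (X ×ˢ Y).image fun p => ({p.1, p.2} : Finset ℕ)
  have hcard : #pairs = u * v := by
    rw [card_image_of_injOn, card_product, Nat.card_Icc, Nat.card_Icc]
    · congr 1; omega
    rintro ⟨a, b⟩ hab ⟨c, d⟩ hcd he
    obtain ⟨ha, hb⟩ := mem_product.1 hab
    obtain ⟨hc, hd⟩ := mem_product.1 hcd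
    have := hlt ha hb
    have := hlt hc hd
    replace he : ({a, b} : Finset ℕ) = {c, d} := he
    have ha' : a ∈ ({c, d} : Finset ℕ) := he ▸ mem_insert_self a {b}
    have hb' : b ∈ ({c, d} : Finset ℕ) := he ▸ mem_insert_of_mem (mem_singleton_self b)
    rw [mem_insert, mem_singleton] at ha' hb'
    exact Prod.ext (by simp only; omega) (by simp only; omega)
  have h23 : {2, 3} ∉ pairs := by
    intro h
    obtain ⟨⟨a, b⟩, hab, he⟩ := mem_image.1 h
    have hb : b ∈ ({2, 3} : Finset ℕ) := he ▸ mem_insert_of_mem (mem_singleton_self b)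
    have := mem_Icc.1 (mem_product.1 hab).2
    rw [mem_insert, mem_singleton] at hb; omega
  rw [← hcard, ← card_insert_of_notMem h23]
  refine card_le_card (insert_subset ?_ (image_subset_iff.2 ?_))
  · refine mem_transversals.2 ⟨mem_powersetCard.2 ⟨?_, rfl⟩, fun B hB =>
      not_disjoint_two_three_of_mem_T2fam (by omega) hB⟩
    refine Subset.trans ?_ subset_union_left
    simp only [X, insert_subset_iff, singleton_subset_iff, mem_Icc]; omega
  · rintro ⟨a, b⟩ hab
    obtain ⟨ha, hb⟩ := mem_product.1 hab
    refine mem_transversals.2 ⟨mem_powersetCard.2 ⟨insert_subset (mem_union_left _ ha)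
      (singleton_subset_iff.2 (mem_union_right _ hb)), card_pair (hlt ha hb).ne⟩, fun B hB =>
      not_disjoint_pair_of_mem_T2fam (hX ha) (hY hb) hB⟩

lemma mul_choose_add_three_le_card_C3fam {u v : ℕ} (hk : 3 ≤ k) (hn : 2 * k ≤ n) (hu : 2 ≤ u)
    (huk : u ≤ k) (hvk : v < k) :
    (u * v + 1) * (n - 1 - (u + v)).choose (k - 3) + 3 ≤ #(C3fam n k) := by
  have hsub : Icc 2 (u + 1) ∪ Icc (k + 2) (k + 1 + v) ⊆ Icc 2 n :=
    union_subset (Icc_subset_Icc_right (by omega)) (Icc_subset_Icc (by omega) (by omega))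
  have hcard : #(Icc 2 (u + 1) ∪ Icc (k + 2) (k + 1 + v)) = u + v := by
    rw [card_union_of_disjoint (by rw [disjoint_left]; intro z; simp only [mem_Icc]; omega),
      Nat.card_Icc, Nat.card_Icc]
    omega
  have hext := card_transversals_mul_choose_le (s := 2) (r := k - 3) (G := T2fam k) hsub
  rw [hcard, Nat.card_Icc, show n + 1 - 2 = n - 1 by omega, show 2 + (k - 3) = k - 1 by omega]
    at hext
  calc (u * v + 1) * (n - 1 - (u + v)).choose (k - 3) + 3
      ≤ #(transversals (Icc 2 n) (k - 1) (T2fam k)) + 3 := by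
        grw [mul_add_one_le_card_transversals_T2fam hu huk hvk, hext]
    _ ≤ #(C3fam n k) := card_transversals_T2fam_add_three_le hk hn

lemma nonTransversals_T2fam_subset (n k r : ℕ) :
    nonTransversals (Icc 2 n) (r + 1) (T2fam k) ⊆
      (Icc 2 n \ Icc 2 (k + 1)).powersetCard (r + 1) ∪
      (Icc 2 n \ insert 2 (Icc (k + 2) (2 * k))).powersetCard (r + 1) ∪
      ((Icc 2 n \ insert 2 (insert 3 (Icc (k + 2) (2 * k)))).powersetCard r).image (insert 2) := by
  intro S hS
  obtain ⟨hSr, B, hB, hd⟩ := mem_nonTransversals.1 hS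
  obtain ⟨hSn, hSc⟩ := mem_powersetCard.1 hSr
  simp only [mem_union, mem_powersetCard, subset_sdiff]
  obtain rfl | rfl | rfl := mem_T2fam.1 hB
  · exact .inl (.inl ⟨⟨hSn, hd⟩, hSc⟩)
  · exact .inl (.inr ⟨⟨hSn, hd⟩, hSc⟩)
  by_cases h2 : 2 ∈ S
  · refine .inr (mem_image.2 ⟨S.erase 2, mem_powersetCard.2 ⟨subset_sdiff.2 ⟨?_, ?_⟩, ?_⟩,
      insert_erase h2⟩)
    · exact (erase_subset _ _).trans hSn
    · exact disjoint_insert_right.2 ⟨notMem_erase _ _, hd.mono_left (erase_subset _ _)⟩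
    · rw [card_erase_of_mem h2, hSc, Nat.add_sub_cancel]
  · exact .inl (.inr ⟨⟨hSn, disjoint_insert_right.2 ⟨h2, (disjoint_insert_right.1 hd).2⟩⟩, hSc⟩)

lemma card_nonTransversals_T2fam_add_choose_le (q j : ℕ) :
    #(nonTransversals (Icc 2 (q + 2 * j + 6)) (j + 2) (T2fam (j + 3))) + q.choose (j + 2) ≤
      2 * (q + j + 2).choose (j + 2) + (q + j + 1).choose (j + 1) := by
  set V := Icc 2 (q + 2 * j + 6)
  set A := Icc 2 (j + 3 + 1)
  set I := Icc (j + 3 + 2) (2 * (j + 3))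
  have hT : T2fam (j + 3) ⊆ V.powersetCard (j + 3) :=
    T2fam_subset_powersetCard (by omega) (by omega)
  have hV : #V = q + j + 2 + (j + 3) := by rw [Nat.card_Icc]; omega
  have hsdiff {B : Finset ℕ} (hB : B ∈ T2fam (j + 3)) : #(V \ B) = q + j + 2 := by
    obtain ⟨hBV, hBk⟩ := mem_powersetCard.1 (hT hB)
    rw [card_sdiff_of_subset hBV, hBk, hV, Nat.add_sub_cancel]
  have hA := hsdiff (mem_T2fam.2 (.inl rfl))
  have hB := hsdiff (mem_T2fam.2 (.inr (.inl rfl)))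
  have hC : #(V \ insert 2 (insert 3 I)) = q + j + 1 := by
    rw [sdiff_insert, card_erase_of_mem, hsdiff (mem_T2fam.2 (.inr (.inr rfl)))]
    · rfl
    · rw [mem_sdiff, mem_Icc]; exact ⟨by omega, by simp [I]⟩
  have hAB : #(V \ A ∩ (V \ insert 2 I)) = q := by
    have hu : A ∪ insert 2 I = Icc 2 (2 * (j + 3)) := by
      ext z; simp only [A, I, mem_union, mem_insert, mem_Icc]; omega
    rw [← sdiff_union_distrib, hu, card_sdiff_of_subset (Icc_subset_Icc_right (by omega)), hV,
      Nat.card_Icc]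
    omega
  have hinter : (V \ A).powersetCard (j + 2) ∩ (V \ insert 2 I).powersetCard (j + 2) =
      (V \ A ∩ (V \ insert 2 I)).powersetCard (j + 2) := by
    ext S; simp only [mem_inter, mem_powersetCard, subset_inter_iff]; tauto
  have hincl := card_union_add_card_inter ((V \ A).powersetCard (j + 2))
    ((V \ insert 2 I).powersetCard (j + 2))
  rw [hinter, card_powersetCard, card_powersetCard, card_powersetCard, hA, hB, hAB]
    at hincl
  have himage := (card_image_le (f := insert 2)).trans
    (card_powersetCard (j + 1) (V \ insert 2 (insert 3 I))).le
  rw [hC] at himage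
  have hcover : #(nonTransversals V (j + 2) (T2fam (j + 3))) ≤
      #((V \ A).powersetCard (j + 2) ∪ (V \ insert 2 I).powersetCard (j + 2)) +
        #(((V \ insert 2 (insert 3 I)).powersetCard (j + 1)).image (insert 2)) :=
    (card_le_card (nonTransversals_T2fam_subset _ _ _)).trans (card_union_le _ _)
  omega

lemma choose_add_choose_add_three_le_card_C3fam (q j : ℕ) :
    (q + 2 * j + 5).choose (j + 2) + q.choose (j + 2) + 3 ≤
      #(C3fam (q + 2 * j + 6) (j + 3)) +
        (2 * (q + j + 2).choose (j + 2) + (q + j + 1).choose (j + 1)) := by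
  have hloss := card_nonTransversals_T2fam_add_choose_le q j
  have hC3 := card_transversals_T2fam_add_three_le (n := q + 2 * j + 6) (k := j + 3) (by omega)
    (by omega)
  have hsum := card_transversals_add_card_nonTransversals (Icc 2 (q + 2 * j + 6)) (j + 2)
    (T2fam (j + 3))
  rw [Nat.card_Icc, show q + 2 * j + 6 + 1 - 2 = q + 2 * j + 5 by omega] at hsum
  rw [show j + 3 - 1 = j + 2 by omega] at hC3
  omega

end ExtremalFamily

lemma card_le_card_C3fam_of_card_nonMemberSubfamily_le {F : Finset (Finset ℕ)} {n k x : ℕ}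
    (hF : IsCoverThree (Icc 1 n) k F) (hk : 3 ≤ k) (hn : 2 * k ≤ n) (hx : x ∈ Icc 1 n)
    (hcard : #(F.nonMemberSubfamily x) ≤ (n - 2 * k).choose (k - 3) + 3) :
    #F ≤ #(C3fam n k) := by
  obtain ⟨j, rfl⟩ : ∃ j, k = j + 3 := ⟨k - 3, by omega⟩
  obtain ⟨q, rfl⟩ : ∃ q, n = q + 2 * j + 6 := ⟨n - 2 * j - 6, by omega⟩
  rw [show q + 2 * j + 6 - 2 * (j + 3) = q by omega, Nat.add_sub_cancel] at hcard
  have hstar := card_memberSubfamily_add_card_nonTransversals_le hF.subset hF.intersecting hx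
  rw [Nat.card_Icc, show q + 2 * j + 6 + 1 - 1 - 1 = q + 2 * j + 5 by omega,
    show j + 3 - 1 = j + 2 by omega] at hstar
  have hsplit := card_memberSubfamily_add_card_nonMemberSubfamily x F
  have hC3 := choose_add_choose_add_three_le_card_C3fam q j
  have hV : #((Icc 1 (q + 2 * j + 6)).erase x) = q + 2 * j + 5 := by
    rw [card_erase_of_mem hx, Nat.card_Icc]; omega
  have hG := nonMemberSubfamily_subset_powersetCard_erase hF.subset x
  have hint : (F.nonMemberSubfamily x : Set (Finset ℕ)).Intersecting :=
    hF.intersecting.mono (coe_subset.2 (filter_subset _ _))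
  have hτ := hF.coverNumberGT.nonMemberSubfamily x
  obtain h3 | h4 := le_or_gt #(F.nonMemberSubfamily x) 3
  · have hloss := choose_le_card_nonTransversals hV hG hint hτ
    omega
  · have hloss := choose_add_choose_le_card_nonTransversals hV hG hint hτ h4
    omega

section Branching

variable {α : Type*} [DecidableEq α] {V S : Finset α} {F P : Finset (Finset α)}
  {b d k q : ℕ}

lemma CoverNumberGT.card_filter_subset_le (hP : CoverNumberGT P q) (hPb : ∀ B ∈ P, #B ≤ b)
    (hF : F ⊆ V.powersetCard k) (hcross : ∀ A ∈ F, ∀ B ∈ P, ¬ Disjoint A B)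
    (hS : #S + d = q + 1) :
    #{A ∈ F | S ⊆ A} ≤ b ^ d * (#V - (q + 1)).choose (k - (q + 1)) := by
  refine card_filter_subset_le_pow_mul_choose hF ∅ (fun R _ hR => ?_) d S (empty_subset S) hS
  obtain ⟨B, hB, hBR⟩ := hP R hR
  exact ⟨B, hPb B hB, hBR, fun A hA _ => hcross A hA B hB⟩

lemma CoverNumberGT.card_filter_subset_transversals_le (hF : CoverNumberGT F q)
    (hk : ∀ B ∈ F, #B ≤ k) (hS : #S + d = q + 1) :
    #{T ∈ transversals V (q + 1) F | S ⊆ T} ≤ k ^ d := by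
  have h := hF.card_filter_subset_le hk (filter_subset _ _ : transversals V (q + 1) F ⊆ _)
    (fun T hT => (mem_transversals.1 hT).2) hS
  rwa [Nat.sub_self, Nat.choose_zero_right, mul_one] at h

lemma card_filter_subset_le_of_forall_not_subset {R : Finset (Finset α)}
    (hF : F ⊆ V.powersetCard k) (hint : (F : Set (Finset α)).Intersecting) (hqk : q ≤ k)
    (hRF : R ⊆ F) (hR : ∀ A ∈ R, ∀ T ∈ transversals V q F, S ⊆ T → ¬ T ⊆ A)
    (hS : #S + d = q + 1) :
    #{A ∈ R | S ⊆ A} ≤ k ^ d * (#V - (q + 1)).choose (k - (q + 1)) := by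
  refine card_filter_subset_le_pow_mul_choose (hRF.trans hF) S ?_ d S Subset.rfl hS
  intro U hSU hU
  by_cases hUR : ∃ A ∈ R, U ⊆ A
  swap
  · push Not at hUR
    exact ⟨∅, by simp, disjoint_empty_left U, fun A hA hUA => absurd hUA (hUR A hA)⟩
  obtain ⟨A, hA, hUA⟩ := hUR
  obtain ⟨hAV, hAk⟩ := mem_powersetCard.1 (hF (hRF hA))
  obtain ⟨T, hUT, hTA, hTq⟩ := exists_subsuperset_card_eq hUA hU (hAk ▸ hqk)
  have hT : ∃ B ∈ F, Disjoint T B := by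
    by_contra! h
    exact hR A hA T (mem_transversals.2 ⟨mem_powersetCard.2 ⟨hTA.trans hAV, hTq⟩, h⟩)
      (hSU.trans hUT) hTA
  obtain ⟨B, hB, hTB⟩ := hT
  exact ⟨B, (mem_powersetCard.1 (hF hB)).2.le, (hTB.mono_left hUT).symm,
    fun A' hA' _ => hint (hRF hA') hB⟩

lemma card_filter_subset_le_card_transversals_mul_add (hF : F ⊆ V.powersetCard k)
    (hint : (F : Set (Finset α)).Intersecting) (hqk : q ≤ k) (hS : #S + d = q + 1) :
    #{A ∈ F | S ⊆ A} ≤ #{T ∈ transversals V q F | S ⊆ T} * (#V - q).choose (k - q) +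
      k ^ d * (#V - (q + 1)).choose (k - (q + 1)) := by
  set R := {A ∈ F | ∀ T ∈ transversals V q F, S ⊆ T → ¬ T ⊆ A} with hR
  have hsplit : {A ∈ F | S ⊆ A} ⊆
      ({T ∈ transversals V q F | S ⊆ T}.biUnion fun T => {A ∈ F | T ⊆ A}) ∪
        {A ∈ R | S ⊆ A} := by
    intro A hA
    rw [mem_filter] at hA
    simp only [hR, mem_union, mem_biUnion, mem_filter]
    by_cases h : ∃ T ∈ transversals V q F, S ⊆ T ∧ T ⊆ A
    · obtain ⟨T, hT, hST, hTA⟩ := h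
      exact .inl ⟨T, ⟨hT, hST⟩, hA.1, hTA⟩
    · push Not at h
      exact .inr ⟨⟨hA.1, h⟩, hA.2⟩
  have hsup : #({T ∈ transversals V q F | S ⊆ T}.biUnion fun T => {A ∈ F | T ⊆ A}) ≤
      #{T ∈ transversals V q F | S ⊆ T} * (#V - q).choose (k - q) :=
    card_biUnion_le_card_mul _ _ _ fun T hT => by
      have hTq := (mem_powersetCard.1 (mem_transversals.1 (mem_filter.1 hT).1).1).2
      simpa only [hTq] using card_filter_subset_le (S := T) hF
  have hrest := card_filter_subset_le_of_forall_not_subset hF hint hqk (filter_subset _ F)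
    (fun A hA => (mem_filter.1 hA).2) hS
  exact (card_le_card hsplit).trans ((card_union_le _ _).trans (Nat.add_le_add hsup hrest))

lemma card_transversals_three_singleton_le {x : α} (hF : IsCoverThree V k F)
    (h : 16 * (#V - 4).choose (k - 4) < #(F.nonMemberSubfamily x)) :
    #{T ∈ transversals V 3 F | {x} ⊆ T} ≤ 3 * k := by
  set P := (transversals V 3 F).memberSubfamily x
  have hP2 : ∀ p ∈ P, #p ≤ 2 := by
    intro p hp
    obtain ⟨hpT, hxp⟩ := mem_memberSubfamily.1 hp
    have := (mem_powersetCard.1 (mem_transversals.1 hpT).1).2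
    rw [card_insert_of_notMem hxp] at this
    omega
  have hcross : ∀ A ∈ F.nonMemberSubfamily x, ∀ p ∈ P, ¬ Disjoint A p := by
    intro A hA p hp hd
    obtain ⟨hAF, hxA⟩ := mem_nonMemberSubfamily.1 hA
    exact (mem_transversals.1 (mem_memberSubfamily.1 hp).1).2 A hAF
      (disjoint_insert_left.2 ⟨hxA, hd.symm⟩)
  have hcover : ¬ CoverNumberGT P 3 := by
    intro hτ
    have := hτ.card_filter_subset_le (S := ∅) (d := 4) hP2
      ((filter_subset _ _).trans hF.subset) hcross (by simp)
    simp only [empty_subset, filter_true] at this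
    exact h.not_ge this
  simp only [CoverNumberGT, not_forall, not_exists, not_and] at hcover
  obtain ⟨S, hS, hSP⟩ := hcover
  have hsub : {T ∈ transversals V 3 F | {x} ⊆ T} ⊆
      (S.erase x).biUnion fun v => {T ∈ transversals V 3 F | {x, v} ⊆ T} := by
    intro T hT
    rw [mem_filter, singleton_subset_iff] at hT
    obtain ⟨v, hvT, hvS⟩ := not_disjoint_iff.1 (hSP (T.erase x)
      (mem_memberSubfamily.2 ⟨by rw [insert_erase hT.2]; exact hT.1, notMem_erase x T⟩))
    obtain ⟨hvx, hvT⟩ := mem_erase.1 hvT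
    exact mem_biUnion.2 ⟨v, mem_erase.2 ⟨hvx, hvS⟩, mem_filter.2 ⟨hT.1,
      insert_subset hT.2 (singleton_subset_iff.2 hvT)⟩⟩
  calc #{T ∈ transversals V 3 F | {x} ⊆ T}
      ≤ #(S.erase x) * k := (card_le_card hsub).trans (card_biUnion_le_card_mul _ _ _ fun v hv => by
        simpa using hF.coverNumberGT.card_filter_subset_transversals_le (V := V) (d := 1)
          (fun B hB => (hF.sized hB).le)
          (by rw [card_pair (ne_of_mem_erase hv).symm]))
    _ ≤ 3 * k := Nat.mul_le_mul_right k ((card_le_card (erase_subset x S)).trans hS)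

lemma card_memberSubfamily_le_of_lt_card_nonMemberSubfamily {x : α} (hF : IsCoverThree V k F)
    (hk : 3 ≤ k) (h : 16 * (#V - 4).choose (k - 4) < #(F.nonMemberSubfamily x)) :
    #(F.memberSubfamily x) ≤
      3 * k * (#V - 3).choose (k - 3) + k ^ 3 * (#V - 4).choose (k - 4) := by
  rw [card_memberSubfamily]
  simp only [← singleton_subset_iff]
  have hcount := card_filter_subset_le_card_transversals_mul_add (S := {x}) (d := 3) hF.subset
    hF.intersecting hk (by simp)
  grw [card_transversals_three_singleton_le hF h] at hcount
  exact hcount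

end Branching

section Graphs

variable {α : Type*} [DecidableEq α] {P Q : Finset (Finset α)} {k : ℕ}

omit [DecidableEq α] in
lemma card_le_mul_card_of_forall_not_disjoint {X Y : Finset α} (hXY : Disjoint X Y)
    (hQ : (Q : Set (Finset α)).Sized 2) (hX : ∀ e ∈ Q, ¬ Disjoint e X)
    (hY : ∀ e ∈ Q, ¬ Disjoint e Y) : #Q ≤ #X * #Y := by
  classical
  have hsub : Q ⊆ (X ×ˢ Y).image fun p => {p.1, p.2} := by
    intro e he
    obtain ⟨x, hxe, hxX⟩ := not_disjoint_iff.1 (hX e he)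
    obtain ⟨y, hye, hyY⟩ := not_disjoint_iff.1 (hY e he)
    refine mem_image.2 ⟨(x, y), mk_mem_product hxX hyY, eq_of_subset_of_card_le
      (insert_subset hxe (singleton_subset_iff.2 hye)) ?_⟩
    rw [hQ he, card_pair (disjoint_iff_ne.1 hXY x hxX y hyY)]
  exact (card_le_card hsub).trans (card_image_le.trans (card_product X Y).le)

lemma exists_common_point_of_four_le_card (hQ : (Q : Set (Finset α)).Sized 2)
    (hint : (Q : Set (Finset α)).Intersecting) (h4 : 4 ≤ #Q) : ∃ y, ∀ e ∈ Q, y ∈ e := by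
  by_contra! h
  obtain ⟨e, he⟩ : Q.Nonempty := card_pos.1 (by omega)
  obtain ⟨u, v, huv, rfl⟩ := card_eq_two.1 (hQ he)
  obtain ⟨f, hf, huf⟩ := h u
  obtain ⟨g, hg, hvg⟩ := h v
  have hvf : v ∈ f := by simpa [huf] using hint he hf
  have hug : u ∈ g := by simpa [hvg] using hint he hg
  obtain ⟨w, hwf, hwg⟩ := not_disjoint_iff.1 (hint hf hg)
  have huw : u ≠ w := fun h => huf (h ▸ hwf)
  have hvw : v ≠ w := fun h => hvg (h ▸ hwg)
  have hf' : {v, w} = f := eq_of_subset_of_card_le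
    (insert_subset hvf (singleton_subset_iff.2 hwf)) (by rw [hQ hf, card_pair hvw])
  have hg' : {u, w} = g := eq_of_subset_of_card_le
    (insert_subset hug (singleton_subset_iff.2 hwg)) (by rw [hQ hg, card_pair huw])
  have htriangle : Q ⊆ ({u, v, w} : Finset α).powersetCard 2 := by
    intro e' he'
    have h₁ := hint he' he
    have h₂ := hint he' hf
    have h₃ := hint he' hg
    rw [← hf'] at h₂
    rw [← hg'] at h₃
    simp only [disjoint_insert_right, disjoint_singleton_right, not_and_or, not_not] at h₁ h₂ h₃
    have hle : #e' ≤ #({u, v, w} ∩ e') := by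
      rw [hQ he']
      obtain ⟨y, z, hyz, hy, hz⟩ : ∃ y z, y ≠ z ∧ y ∈ {u, v, w} ∩ e' ∧ z ∈ {u, v, w} ∩ e' := by
        simp only [mem_inter, mem_insert, mem_singleton]
        by_cases hu : u ∈ e'
        · obtain hv | hw := h₂
          exacts [⟨u, v, huv, by simp [hu], by simp [hv]⟩, ⟨u, w, huw, by simp [hu], by simp [hw]⟩]
        · exact ⟨v, w, hvw, by simp [h₁.resolve_left hu], by simp [h₃.resolve_left hu]⟩
      exact one_lt_card.2 ⟨y, hy, z, hz, hyz⟩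
    have := eq_of_subset_of_card_le inter_subset_right hle
    exact mem_powersetCard.2 ⟨this ▸ inter_subset_left, hQ he'⟩
  have := card_le_card htriangle
  rw [card_powersetCard, card_eq_three.2 ⟨u, v, w, huv, huw, hvw, rfl⟩] at this
  exact absurd (h4.trans this) (by decide)

lemma card_le_of_intersecting_of_degree_le (hP : (P : Set (Finset α)).Sized 2)
    (hint : (P : Set (Finset α)).Intersecting) (hdeg : ∀ y, #{e ∈ P | y ∈ e} ≤ k) (hk : 3 ≤ k) :
    #P ≤ k := by
  obtain h3 | h4 := le_or_gt #P 3
  · exact h3.trans hk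
  · obtain ⟨y, hy⟩ := exists_common_point_of_four_le_card hP hint h4
    simpa only [filter_true_of_mem hy] using hdeg y

lemma card_le_three_of_cross_disjoint {e f : Finset α} (hQ : (Q : Set (Finset α)).Sized 2)
    (hint : (Q : Set (Finset α)).Intersecting) (he : #e ≤ 3) (hf : #f ≤ 3)
    (hef : Disjoint e f) (heQ : ∀ g ∈ Q, ¬ Disjoint g e) (hfQ : ∀ g ∈ Q, ¬ Disjoint g f) :
    #Q ≤ 3 := by
  by_contra! h4
  obtain ⟨y, hy⟩ := exists_common_point_of_four_le_card hQ hint h4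
  obtain ⟨X, hX, hyX, hXQ⟩ : ∃ X : Finset α, #X ≤ 3 ∧ y ∉ X ∧ ∀ g ∈ Q, ¬ Disjoint g X := by
    by_cases hye : y ∈ e
    exacts [⟨f, hf, disjoint_left.1 hef hye, hfQ⟩, ⟨e, he, hye, heQ⟩]
  have := card_le_mul_card_of_forall_not_disjoint (disjoint_singleton_left.2 hyX) hQ
    (fun g hg => by simpa using hy g hg) hXQ
  rw [card_singleton] at this
  omega

lemma card_le_succ_of_cross_intersecting (hP : (P : Set (Finset α)).Sized 2)
    (hQ : (Q : Set (Finset α)).Sized 2) (hQint : (Q : Set (Finset α)).Intersecting)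
    (hcross : ∀ e ∈ P, ∀ f ∈ Q, ¬ Disjoint e f) (hdeg : ∀ y, #{e ∈ P | y ∈ e} ≤ k)
    (hQ2 : 2 ≤ #Q) : #P ≤ k + 1 := by
  obtain ⟨g, hg, h, hh, hgh⟩ := one_lt_card.1 hQ2
  obtain ⟨y, hyg, hyh⟩ := not_disjoint_iff.1 (hQint hg hh)
  have hinter : g ∩ h = {y} := by
    refine (eq_of_subset_of_card_le (singleton_subset_iff.2 (mem_inter.2 ⟨hyg, hyh⟩)) ?_).symm
    have := card_inter_lt_of_ne (hQ hg) (hQ hh) hgh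
    rw [card_singleton]; omega
  have hrest : #{e ∈ P | y ∉ e} ≤ 1 := by
    have hcard {f : Finset α} (hf : f ∈ Q) (hy : y ∈ f) : #(f.erase y) = 1 := by
      rw [card_erase_of_mem hy, hQ hf]
    have hmeet {f e : Finset α} (hf : f ∈ Q) (he : e ∈ {e ∈ P | y ∉ e}) :
        ¬ Disjoint e (f.erase y) := by
      obtain ⟨heP, hye⟩ := mem_filter.1 he
      rw [← disjoint_erase_comm, erase_eq_of_notMem hye]
      exact hcross e heP f hf
    have hd : Disjoint (g.erase y) (h.erase y) := by
      rw [disjoint_iff_inter_eq_empty, erase_inter, inter_erase, hinter, erase_singleton,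
        erase_empty]
    simpa only [hcard hg hyg, hcard hh hyh] using card_le_mul_card_of_forall_not_disjoint hd
      (hP.mono (coe_subset.2 (filter_subset _ _))) (fun e he => hmeet hg he)
      (fun e he => hmeet hh he)
  rw [← card_filter_add_card_filter_not (s := P) (y ∈ ·)]
  exact Nat.add_le_add (hdeg y) hrest

lemma exists_disjoint_of_not_intersecting (hP : ¬ (P : Set (Finset α)).Intersecting) :
    ∃ e ∈ P, ∃ f ∈ P, Disjoint e f := by
  simpa only [Set.Intersecting, mem_coe, not_forall, not_not, exists_prop] using hP

lemma card_add_card_le_two_mul_of_not_intersecting (hP : (P : Set (Finset α)).Sized 2)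
    (hQ : (Q : Set (Finset α)).Sized 2) (hcross : ∀ e ∈ P, ∀ f ∈ Q, ¬ Disjoint e f)
    (hPdeg : ∀ y, #{e ∈ P | y ∈ e} ≤ k) (hk : 4 ≤ k) (hQ2 : 2 ≤ #Q)
    (hPint : ¬ (P : Set (Finset α)).Intersecting) : #P + #Q ≤ 2 * k := by
  obtain ⟨e, he, f, hf, hef⟩ := exists_disjoint_of_not_intersecting hPint
  have hcross' {e : Finset α} (he : e ∈ P) : ∀ g ∈ Q, ¬ Disjoint g e := fun g hg hd =>
    hcross e he g hg hd.symm
  by_cases hQint : (Q : Set (Finset α)).Intersecting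
  · have hQ3 := card_le_three_of_cross_disjoint hQ hQint (by rw [hP he]; omega)
      (by rw [hP hf]; omega) hef (hcross' he) (hcross' hf)
    have hPk := card_le_succ_of_cross_intersecting hP hQ hQint hcross hPdeg hQ2
    omega
  · obtain ⟨g, hg, h, hh, hgh⟩ := exists_disjoint_of_not_intersecting hQint
    have hQ4 := card_le_mul_card_of_forall_not_disjoint hef hQ (hcross' he) (hcross' hf)
    have hP4 := card_le_mul_card_of_forall_not_disjoint hgh hP (fun e he => hcross e he g hg)
      (fun e he => hcross e he h hh)
    rw [hP he, hP hf] at hQ4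
    rw [hQ hg, hQ hh] at hP4
    omega

lemma card_add_card_le_two_mul_of_cross_intersecting (hP : (P : Set (Finset α)).Sized 2)
    (hQ : (Q : Set (Finset α)).Sized 2) (hcross : ∀ e ∈ P, ∀ f ∈ Q, ¬ Disjoint e f)
    (hPdeg : ∀ y, #{e ∈ P | y ∈ e} ≤ k) (hQdeg : ∀ y, #{f ∈ Q | y ∈ f} ≤ k) (hk : 4 ≤ k)
    (hP2 : 2 ≤ #P) (hQ2 : 2 ≤ #Q) : #P + #Q ≤ 2 * k := by
  by_cases hPint : (P : Set (Finset α)).Intersecting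
  · by_cases hQint : (Q : Set (Finset α)).Intersecting
    · have hPk := card_le_of_intersecting_of_degree_le hP hPint hPdeg (by omega)
      have hQk := card_le_of_intersecting_of_degree_le hQ hQint hQdeg (by omega)
      omega
    · rw [add_comm]
      exact card_add_card_le_two_mul_of_not_intersecting hQ hP
        (fun f hf e he hd => hcross e he f hf hd.symm) hQdeg hk hP2 hQint
  · exact card_add_card_le_two_mul_of_not_intersecting hP hQ hcross hPdeg hk hQ2 hPint

end Graphs

section ThreeUniform

variable {α : Type*} [DecidableEq α] {V T : Finset α} {F Q : Finset (Finset α)} {a b : α}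

lemma exists_common_point_of_cross_disjoint {e f : Finset α} (hQ : (Q : Set (Finset α)).Sized 2)
    (hint : (Q : Set (Finset α)).Intersecting) (hne : Q.Nonempty) (hef : Disjoint e f)
    (heQ : ∀ g ∈ Q, ¬ Disjoint g e) (hfQ : ∀ g ∈ Q, ¬ Disjoint g f) : ∃ y, ∀ g ∈ Q, y ∈ g := by
  have hpair {g : Finset α} {x z : α} (hg : g ∈ Q) (hx : x ∈ g) (hxe : x ∈ e) (hz : z ∈ g)
      (hzf : z ∈ f) : g = {x, z} := by
    refine (eq_of_subset_of_card_le (insert_subset hx (singleton_subset_iff.2 hz)) ?_).symm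
    rw [hQ hg, card_pair (disjoint_iff_ne.1 hef x hxe z hzf)]
  by_contra! h
  obtain ⟨g, hg⟩ := hne
  obtain ⟨x, hxg, hxe⟩ := not_disjoint_iff.1 (heQ g hg)
  obtain ⟨z, hzg, hzf⟩ := not_disjoint_iff.1 (hfQ g hg)
  obtain rfl := hpair hg hxg hxe hzg hzf
  obtain ⟨g₁, hg₁, hx₁⟩ := h x
  obtain ⟨g₂, hg₂, hz₂⟩ := h z
  obtain ⟨x', hx', hxe'⟩ := not_disjoint_iff.1 (heQ g₁ hg₁)
  obtain ⟨z', hz', hzf'⟩ := not_disjoint_iff.1 (hfQ g₂ hg₂)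
  have hz₁ : z ∈ g₁ := by simpa [hx₁] using hint hg hg₁
  have hx₂ : x ∈ g₂ := by simpa [hz₂] using hint hg hg₂
  have h₁ := hpair hg₁ hx' hxe' hz₁ hzf
  have h₂ := hpair hg₂ hx₂ hxe hz' hzf'
  refine hint hg₁ hg₂ ?_
  rw [h₁, disjoint_insert_left, disjoint_singleton_left]
  refine ⟨?_, hz₂⟩
  rw [h₂, mem_insert, mem_singleton, not_or]
  exact ⟨fun h => hx₁ (h ▸ hx'), disjoint_iff_ne.1 hef x' hxe' z' hzf'⟩

omit [DecidableEq α] in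
lemma card_le_three_of_cross_path {g h m : Finset α} (hQ : (Q : Set (Finset α)).Sized 2)
    (hg : #g = 2) (hh : #h = 2) (hm : #m = 2) (hgh : Disjoint g h) (hmg : ¬ Disjoint m g)
    (hmh : ¬ Disjoint m h) (hgQ : ∀ e ∈ Q, ¬ Disjoint e g) (hhQ : ∀ e ∈ Q, ¬ Disjoint e h)
    (hmQ : ∀ e ∈ Q, ¬ Disjoint e m) : #Q ≤ 3 := by
  classical
  obtain ⟨x, hxm, hxg⟩ := not_disjoint_iff.1 hmg
  obtain ⟨y, hym, hyh⟩ := not_disjoint_iff.1 hmh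
  have hxy : x ≠ y := disjoint_iff_ne.1 hgh x hxg y hyh
  obtain rfl : {x, y} = m := eq_of_subset_of_card_le
    (insert_subset hxm (singleton_subset_iff.2 hym)) (by rw [hm, card_pair hxy])
  have hsized (p : Finset α → Prop) [DecidablePred p] :
      (({e ∈ Q | p e} : Finset (Finset α)) : Set (Finset α)).Sized 2 :=
    hQ.mono (coe_subset.2 (filter_subset _ _))
  have hmem : #{e ∈ Q | x ∈ e} ≤ 2 := by
    simpa only [card_singleton, one_mul, hh] using card_le_mul_card_of_forall_not_disjoint
      (disjoint_singleton_left.2 (disjoint_left.1 hgh hxg)) (hsized (x ∈ ·))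
      (fun e he => by simpa using (mem_filter.1 he).2) (fun e he => hhQ e (mem_filter.1 he).1)
  have hnotMem : #{e ∈ Q | x ∉ e} ≤ 1 := by
    have hd : Disjoint {y} (g.erase x) :=
      disjoint_singleton_left.2 fun h => disjoint_left.1 hgh (mem_of_mem_erase h) hyh
    have := card_le_mul_card_of_forall_not_disjoint hd (hsized (x ∉ ·))
      (fun e he => by
        obtain ⟨he, hx⟩ := mem_filter.1 he
        simpa [hx] using hmQ e he)
      (fun e he => by
        obtain ⟨he, hx⟩ := mem_filter.1 he
        rw [← disjoint_erase_comm, erase_eq_of_notMem hx]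
        exact hgQ e he)
    rwa [card_singleton, card_erase_of_mem hxg, hg] at this
  rw [← card_filter_add_card_filter_not (s := Q) (x ∈ ·)]
  omega

/-- The link of `a` in `F`, restricted to the sets that lie outside `T`. For `a ∈ T` its members
are the sets `A \ T` with `A ∈ F` and `A ∩ T = {a}`. -/
def outerLink (F : Finset (Finset α)) (T : Finset α) (a : α) : Finset (Finset α) :=
  {e ∈ F.memberSubfamily a | Disjoint e T}

lemma mem_outerLink {e : Finset α} :
    e ∈ outerLink F T a ↔ (insert a e ∈ F ∧ a ∉ e) ∧ Disjoint e T := by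
  rw [outerLink, mem_filter, mem_memberSubfamily]

lemma sized_outerLink (hF : (F : Set (Finset α)).Sized 3) :
    (outerLink F T a : Set (Finset α)).Sized 2 := by
  intro e he
  obtain ⟨⟨heF, hae⟩, -⟩ := mem_outerLink.1 he
  have := hF heF
  rw [card_insert_of_notMem hae] at this
  omega

lemma not_disjoint_sdiff_of_mem_outerLink {D e : Finset α}
    (hint : (F : Set (Finset α)).Intersecting) (he : e ∈ outerLink F T a) (hD : D ∈ F)
    (haD : a ∉ D) : ¬ Disjoint e (D \ T) := by
  obtain ⟨⟨heF, -⟩, heT⟩ := mem_outerLink.1 he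
  rw [← disjoint_sdiff_comm, heT.sdiff_eq_left]
  exact fun hd => hint heF hD (disjoint_insert_left.2 ⟨haD, hd⟩)

lemma sdiff_mem_outerLink {A : Finset α} (hA : A ∈ F) (hAT : A ∩ T = {a}) :
    A \ T ∈ outerLink F T a := by
  have haT : a ∈ T := (mem_inter.1 (hAT ▸ mem_singleton_self a)).2
  refine mem_outerLink.2 ⟨⟨?_, fun h => (mem_sdiff.1 h).2 haT⟩, sdiff_disjoint⟩
  rwa [insert_eq, ← hAT, union_comm, sdiff_union_inter]

lemma not_disjoint_of_mem_outerLink {e f : Finset α} (hint : (F : Set (Finset α)).Intersecting)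
    (ha : a ∈ T) (hb : b ∈ T) (hab : a ≠ b) (he : e ∈ outerLink F T a)
    (hf : f ∈ outerLink F T b) : ¬ Disjoint e f := by
  obtain ⟨⟨heF, -⟩, heT⟩ := mem_outerLink.1 he
  obtain ⟨⟨hfF, -⟩, hfT⟩ := mem_outerLink.1 hf
  refine fun hd => hint heF hfF ?_
  rw [disjoint_insert_left, mem_insert, not_or, disjoint_insert_right]
  exact ⟨⟨hab, disjoint_right.1 hfT ha⟩, disjoint_right.1 heT hb, hd⟩

lemma card_filter_inter_eq_le (R : Finset α) :
    #{A ∈ F | A ∩ T = R} ≤ #({A ∈ F | A ∩ T = R}.image (· \ T)) := by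
  rw [card_image_of_injOn]
  intro A hA B hB h
  have hAT := (mem_filter.1 hA).2
  have hBT := (mem_filter.1 hB).2
  rw [← sdiff_union_inter A T, ← sdiff_union_inter B T, hAT, hBT]
  exact congrArg (· ∪ R) h

lemma card_filter_inter_eq_singleton_le :
    #{A ∈ F | A ∩ T = {a}} ≤ #(outerLink F T a) :=
  (card_filter_inter_eq_le {a}).trans (card_le_card (image_subset_iff.2 fun _ hA =>
    sdiff_mem_outerLink (mem_filter.1 hA).1 (mem_filter.1 hA).2))

lemma outerLink_nonempty (hF : IsCoverThree V 3 F) (hT : T ∈ F) (hb : b ∈ T) :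
    (outerLink F T b).Nonempty := by
  obtain ⟨D, hD, hDT⟩ := hF.coverNumberGT (T.erase b) (by
    rw [card_erase_of_mem hb, (mem_powersetCard.1 (hF.subset hT)).2])
  refine ⟨D \ T, sdiff_mem_outerLink hD ?_⟩
  obtain ⟨z, hzD, hzT⟩ := not_disjoint_iff.1 (hF.intersecting hD hT)
  have hsub : D ∩ T ⊆ {b} := by
    intro y hy
    by_contra hyb
    exact disjoint_left.1 hDT (mem_inter.1 hy).1
      (mem_erase.2 ⟨fun h => hyb (mem_singleton.2 h), (mem_inter.1 hy).2⟩)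
  exact (subset_singleton_iff.1 hsub).resolve_left (ne_empty_of_mem (mem_inter.2 ⟨hzD, hzT⟩))

lemma card_sdiff_add_card_inter_eq_three (hF : IsCoverThree V 3 F) {A : Finset α} (hA : A ∈ F)
    (T : Finset α) : #(A \ T) + #(A ∩ T) = 3 := by
  rw [card_sdiff_add_card_inter, hF.sized hA]

lemma card_outerLink_le_two_of_common_point {y : α} (hF : IsCoverThree V 3 F) (hT : T ∈ F)
    (hy : ∀ e ∈ outerLink F T a, y ∈ e) : #(outerLink F T a) ≤ 2 := by
  obtain ⟨D, hD, hd⟩ := hF.coverNumberGT {a, y} card_le_two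
  rw [disjoint_insert_right, disjoint_singleton_right] at hd
  have hDT : #(D \ T) ≤ 2 := by
    have := card_sdiff_add_card_inter_eq_three hF hD T
    have := card_pos.2 (not_disjoint_iff_nonempty_inter.1 (hF.intersecting hD hT))
    omega
  have := card_le_mul_card_of_forall_not_disjoint
    (disjoint_singleton_left.2 fun h => hd.2 (mem_sdiff.1 h).1) (sized_outerLink hF.sized)
    (fun e he => by simpa using hy e he)
    (fun e he => not_disjoint_sdiff_of_mem_outerLink hF.intersecting he hD hd.1)
  rw [card_singleton, one_mul] at this
  exact this.trans hDT

lemma exists_notMem_outerLink (hF : IsCoverThree V 3 F) (hT : T ∈ F)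
    (hB : ∀ A ∈ F, A ∩ T ≠ T.erase a) (y : α) :
    ∃ b ∈ T.erase a, ∃ m ∈ outerLink F T b, y ∉ m := by
  obtain ⟨D, hD, hd⟩ := hF.coverNumberGT {a, y} card_le_two
  rw [disjoint_insert_right, disjoint_singleton_right] at hd
  have hsub : D ∩ T ⊆ T.erase a :=
    subset_erase.2 ⟨inter_subset_right, fun h => hd.1 (mem_inter.1 h).1⟩
  have hlt := card_lt_card (hsub.ssubset_of_ne (hB D hD))
  have hpos := card_pos.2 (not_disjoint_iff_nonempty_inter.1 (hF.intersecting hD hT))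
  have hle : #(T.erase a) ≤ 2 := by
    by_cases ha : a ∈ T
    · rw [card_erase_of_mem ha, hF.sized hT]
    · obtain ⟨A, hA, hAT⟩ : ∃ A ∈ F, A ∩ T = T.erase a :=
        ⟨T, hT, by rw [inter_self, erase_eq_of_notMem ha]⟩
      exact absurd hAT (hB A hA)
  obtain ⟨b, hb⟩ := card_eq_one.1 (show #(D ∩ T) = 1 by omega)
  exact ⟨b, hsub (hb ▸ mem_singleton_self b), D \ T, sdiff_mem_outerLink hD hb,
    fun h => hd.2 (mem_sdiff.1 h).1⟩

lemma intersecting_biUnion_outerLink (hF : IsCoverThree V 3 F) (hT : T ∈ F) (ha : a ∈ T)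
    (h4 : 4 ≤ #(outerLink F T a)) :
    (((T.erase a).biUnion (outerLink F T) : Finset (Finset α)) : Set (Finset α)).Intersecting := by
  intro g hg h hh hd
  obtain ⟨b, hb, hg⟩ := mem_biUnion.1 hg
  obtain ⟨b', hb', hh⟩ := mem_biUnion.1 hh
  obtain ⟨hba, hbT⟩ := mem_erase.1 hb
  obtain rfl : b = b' := by
    by_contra hbb'
    exact not_disjoint_of_mem_outerLink hF.intersecting hbT (mem_of_mem_erase hb') hbb' hg hh hd
  obtain ⟨c, hc, hcb⟩ : ∃ c ∈ T.erase a, c ≠ b := exists_mem_ne (by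
    rw [card_erase_of_mem ha, hF.sized hT]; decide) b
  obtain ⟨hca, hcT⟩ := mem_erase.1 hc
  obtain ⟨m, hm⟩ := outerLink_nonempty hF hT hcT
  have hcross {x y : α} (hx : x ∈ T) (hy : y ∈ T) (hxy : x ≠ y) {e f : Finset α}
      (he : e ∈ outerLink F T x) (hf : f ∈ outerLink F T y) : ¬ Disjoint e f :=
    not_disjoint_of_mem_outerLink hF.intersecting hx hy hxy he hf
  have hsized {x : α} : (outerLink F T x : Set (Finset α)).Sized 2 := sized_outerLink hF.sized
  have := card_le_three_of_cross_path (Q := outerLink F T a) hsized (hsized hg) (hsized hh)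
    (hsized hm) hd (hcross hcT hbT hcb hm hg) (hcross hcT hbT hcb hm hh)
    (fun e he => hcross ha hbT hba.symm he hg) (fun e he => hcross ha hbT hba.symm he hh)
    (fun e he => hcross ha hcT hca.symm he hm)
  omega

lemma card_outerLink_le_three (hF : IsCoverThree V 3 F) (hT : T ∈ F) (ha : a ∈ T)
    (hB : ∀ A ∈ F, A ∩ T ≠ T.erase a) : #(outerLink F T a) ≤ 3 := by
  by_contra! h4
  have hsized {x : α} : (outerLink F T x : Set (Finset α)).Sized 2 := sized_outerLink hF.sized
  have hLa : ¬ (outerLink F T a : Set (Finset α)).Intersecting := by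
    intro hint
    obtain ⟨y, hy⟩ := exists_common_point_of_four_le_card hsized hint h4
    have := card_outerLink_le_two_of_common_point hF hT hy
    omega
  obtain ⟨e, he, f, hf, hef⟩ := exists_disjoint_of_not_intersecting hLa
  set M := (T.erase a).biUnion (outerLink F T)
  have hM : (M : Set (Finset α)).Sized 2 := by
    intro m hm
    obtain ⟨b, -, hm⟩ := mem_biUnion.1 (mem_coe.1 hm)
    exact hsized hm
  have hMcross {e m : Finset α} (he : e ∈ outerLink F T a) (hm : m ∈ M) : ¬ Disjoint m e := by
    obtain ⟨b, hb, hm⟩ := mem_biUnion.1 hm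
    exact not_disjoint_of_mem_outerLink hF.intersecting (mem_of_mem_erase hb) ha
      (ne_of_mem_erase hb) hm he
  have hMavoid (y : α) : ∃ m ∈ M, y ∉ m := by
    obtain ⟨b, hb, m, hm, hy⟩ := exists_notMem_outerLink hF hT hB y
    exact ⟨m, mem_biUnion.2 ⟨b, hb, hm⟩, hy⟩
  obtain ⟨y, hy⟩ := exists_common_point_of_cross_disjoint hM
    (intersecting_biUnion_outerLink hF hT ha h4) ((hMavoid a).imp fun _ h => h.1) hef
    (fun m hm => hMcross he hm) (fun m hm => hMcross hf hm)
  obtain ⟨m, hm, hym⟩ := hMavoid y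
  exact hym (hy m hm)

lemma exists_sdiff_eq_singleton (hF : IsCoverThree V 3 F) (hT : T ∈ F) (ha : a ∈ T) {A : Finset α}
    (hA : A ∈ F) (hAT : A ∩ T = T.erase a) : ∃ z, A \ T = {z} := by
  refine card_eq_one.1 ?_
  have h₁ := card_sdiff_add_card_inter_eq_three hF hA T
  have h₂ := card_erase_of_mem ha
  rw [hAT] at h₁
  rw [hF.sized hT] at h₂
  omega

lemma exists_subset_of_mem_outerLink (hF : IsCoverThree V 3 F) (hT : T ∈ F) (ha : a ∈ T) :
    ∃ U : Finset α, #{A ∈ F | A ∩ T = T.erase a} ≤ #U ∧ #U ≤ 2 ∧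
      ∀ e ∈ outerLink F T a, U ⊆ e := by
  have hsingle {A : Finset α} (hA : A ∈ {A ∈ F | A ∩ T = T.erase a}) : ∃ z, A \ T = {z} :=
    exists_sdiff_eq_singleton hF hT ha (mem_filter.1 hA).1 (mem_filter.1 hA).2
  set U := {A ∈ F | A ∩ T = T.erase a}.biUnion (· \ T)
  have hcard : #{A ∈ F | A ∩ T = T.erase a} ≤ #U := by
    refine (card_filter_inter_eq_le _).trans (le_trans (card_le_card ?_)
      (card_image_le (f := fun z => ({z} : Finset α))))
    refine image_subset_iff.2 fun A hA => ?_
    obtain ⟨z, hz⟩ := hsingle hA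
    exact mem_image.2 ⟨z, mem_biUnion.2 ⟨A, hA, hz ▸ mem_singleton_self z⟩, hz.symm⟩
  have hUmem {z : α} (hz : z ∈ U) : ∃ A ∈ F, A ∩ T = T.erase a ∧ A \ T = {z} := by
    obtain ⟨A, hA, hzA⟩ := mem_biUnion.1 hz
    obtain ⟨z', hz'⟩ := hsingle hA
    obtain rfl : z = z' := mem_singleton.1 (hz' ▸ hzA)
    exact ⟨A, (mem_filter.1 hA).1, (mem_filter.1 hA).2, hz'⟩
  have hUe : ∀ e ∈ outerLink F T a, U ⊆ e := by
    intro e he z hz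
    obtain ⟨A, hA, hAT, hAz⟩ := hUmem hz
    have haA : a ∉ A := fun h => notMem_erase a T (hAT ▸ mem_inter.2 ⟨h, ha⟩)
    simpa [hAz] using not_disjoint_sdiff_of_mem_outerLink hF.intersecting he hA haA
  obtain ⟨D, hD, hDT⟩ := hF.coverNumberGT (T.erase a) (by
    rw [card_erase_of_mem ha, hF.sized hT])
  have hUD : U ⊆ D \ T := by
    intro z hz
    obtain ⟨A, hA, hAT, hAz⟩ := hUmem hz
    have hd : ¬ Disjoint D (A \ T) := by
      intro hd
      refine hF.intersecting hD hA ?_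
      rw [← sdiff_union_inter A T, hAT]
      exact disjoint_union_right.2 ⟨hd, hDT⟩
    rw [hAz, disjoint_singleton_right, not_not] at hd
    exact mem_sdiff.2 ⟨hd, (mem_sdiff.1 (hAz ▸ mem_singleton_self z)).2⟩
  have := card_sdiff_add_card_inter_eq_three hF hD T
  have := card_pos.2 (not_disjoint_iff_nonempty_inter.1 (hF.intersecting hD hT))
  have := card_le_card hUD
  exact ⟨U, hcard, by omega, hUe⟩

lemma card_outerLink_add_card_le_three (hF : IsCoverThree V 3 F) (hT : T ∈ F) (ha : a ∈ T) :
    #(outerLink F T a) + #{A ∈ F | A ∩ T = T.erase a} ≤ 3 := by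
  obtain ⟨U, hcard, hU2, hUe⟩ := exists_subset_of_mem_outerLink hF hT ha
  obtain hU0 | hU1 | hU2 : #U = 0 ∨ #U = 1 ∨ #U = 2 := by omega
  · rw [hU0, Nat.le_zero, card_eq_zero] at hcard
    rw [hcard, card_empty]
    exact card_outerLink_le_three hF hT ha (filter_eq_empty_iff.1 hcard)
  · obtain ⟨z, hz⟩ := card_eq_one.1 hU1
    have := card_outerLink_le_two_of_common_point hF hT (y := z)
      fun e he => hUe e he (hz ▸ mem_singleton_self z)
    omega
  · have : #(outerLink F T a) ≤ 1 := by
      refine card_le_one_iff_subset_singleton.2 ⟨U, fun e he => mem_singleton.2 ?_⟩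
      exact (eq_of_subset_of_card_le (hUe e he) (by rw [hU2, sized_outerLink hF.sized he])).symm
    omega

theorem card_le_ten_of_isCoverThree (hF : IsCoverThree V 3 F) : #F ≤ 10 := by
  obtain ⟨T, hT, -⟩ := hF.coverNumberGT ∅ (by simp)
  have hsub : F ⊆ {T} ∪ T.biUnion fun a =>
      {A ∈ F | A ∩ T = {a}} ∪ {A ∈ F | A ∩ T = T.erase a} := by
    intro A hA
    have hpos := card_pos.2 (not_disjoint_iff_nonempty_inter.1 (hF.intersecting hA hT))
    have hle := card_le_card (inter_subset_right : A ∩ T ⊆ T)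
    rw [hF.sized hT] at hle
    simp only [mem_union, mem_singleton, mem_biUnion, mem_filter]
    obtain h1 | h2 | h3 : #(A ∩ T) = 1 ∨ #(A ∩ T) = 2 ∨ #(A ∩ T) = 3 := by omega
    · obtain ⟨a, ha⟩ := card_eq_one.1 h1
      exact .inr ⟨a, (mem_inter.1 (ha ▸ mem_singleton_self a)).2, .inl ⟨hA, ha⟩⟩
    · obtain ⟨a, haT, ha⟩ := exists_mem_notMem_of_card_lt_card
        (show #(A ∩ T) < #T by rw [h2, hF.sized hT]; decide)
      refine .inr ⟨a, haT, .inr ⟨hA, eq_of_subset_of_card_le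
        (subset_erase.2 ⟨inter_subset_right, ha⟩) ?_⟩⟩
      rw [card_erase_of_mem haT, hF.sized hT, h2]
    · refine .inl (eq_of_subset_of_card_le ?_ (hF.sized hA |>.trans (hF.sized hT).symm).le).symm
      rw [← hF.sized hT] at h3
      exact inter_eq_right.1 (eq_of_subset_of_card_le inter_subset_right h3.ge)
  have hlocal : ∀ a ∈ T, #({A ∈ F | A ∩ T = {a}} ∪ {A ∈ F | A ∩ T = T.erase a}) ≤ 3 :=
    fun a ha => (card_union_le _ _).trans ((Nat.add_le_add_right
      card_filter_inter_eq_singleton_le _).trans (card_outerLink_add_card_le_three hF hT ha))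
  calc #F ≤ 1 + #T * 3 := (card_le_card hsub).trans ((card_union_le _ _).trans
        (Nat.add_le_add (card_singleton T).le (card_biUnion_le_card_mul _ _ _ hlocal)))
    _ = 10 := by rw [hF.sized hT]

end ThreeUniform

section ThreeTransversals

variable {α : Type*} [DecidableEq α] {V : Finset α} {F : Finset (Finset α)} {k : ℕ} {p q : α}

lemma card_filter_pair_transversals_le (hτ : CoverNumberGT F 2) (hk : ∀ B ∈ F, #B ≤ k)
    (hpq : p ≠ q) : #{T ∈ transversals V 3 F | {p, q} ⊆ T} ≤ k := by
  simpa only [pow_one] using hτ.card_filter_subset_transversals_le (d := 1) hk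
    (by rw [card_pair hpq])

lemma card_filter_pair_union_lt {z : α} {B : Finset α} (hτ : CoverNumberGT F 2)
    (hk : ∀ B ∈ F, #B ≤ k) (hpq : p ≠ q) (hB : B ∈ F) (hpB : p ∉ B) (hqB : q ∉ B) (hzB : z ∈ B) :
    #({T ∈ transversals V 3 F | {p, q} ⊆ T} ∪ {T ∈ transversals V 3 F | {p, z} ⊆ T}) < 2 * k := by
  set X := {T ∈ transversals V 3 F | {p, q} ⊆ T}
  set Y := {T ∈ transversals V 3 F | {p, z} ⊆ T}
  have hXk : #X ≤ k := card_filter_pair_transversals_le hτ hk hpq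
  have hYk : #Y ≤ k := card_filter_pair_transversals_le hτ hk fun h => hpB (h ▸ hzB)
  have hincl := card_union_add_card_inter X Y
  obtain hXY | hXY := (X ∩ Y).eq_empty_or_nonempty
  swap
  · have := hXY.card_pos
    omega
  have hsub : X ⊆ (B.erase z).biUnion fun w => {T ∈ transversals V 3 F | {p, q, w} ⊆ T} := by
    intro T hT
    obtain ⟨hT𝒯, hpqT⟩ := mem_filter.1 hT
    obtain ⟨hpT, hqT⟩ := insert_subset_iff.1 hpqT
    obtain ⟨w, hwT, hwB⟩ := not_disjoint_iff.1 ((mem_transversals.1 hT𝒯).2 B hB)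
    have hwz : w ≠ z := by
      rintro rfl
      exact notMem_empty T (hXY ▸ mem_inter.2 ⟨hT, mem_filter.2 ⟨hT𝒯,
        insert_subset hpT (singleton_subset_iff.2 hwT)⟩⟩)
    exact mem_biUnion.2 ⟨w, mem_erase.2 ⟨hwz, hwB⟩, mem_filter.2 ⟨hT𝒯,
      insert_subset hpT (insert_subset (singleton_subset_iff.1 hqT)
        (singleton_subset_iff.2 hwT))⟩⟩
  have hXB : #X ≤ #(B.erase z) * 1 :=
    (card_le_card hsub).trans (card_biUnion_le_card_mul _ _ _ fun w hw => by
      have hwB := mem_of_mem_erase hw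
      exact hτ.card_filter_subset_transversals_le (d := 0) hk (card_eq_three.2 ⟨p, q, w, hpq,
        fun h => hpB (h ▸ hwB), fun h => hqB (h ▸ hwB), rfl⟩))
  have hBk := hk B hB
  have hBpos := card_pos.2 ⟨z, hzB⟩
  rw [card_erase_of_mem hzB] at hXB
  omega

lemma card_filter_mem_transversals_lt {T₀ : Finset α} (hτ : CoverNumberGT F 2)
    (hk : ∀ B ∈ F, #B ≤ k) (hint : (transversals V 3 F : Set (Finset α)).Intersecting)
    (hT₀ : T₀ ∈ transversals V 3 F) (hp : p ∉ T₀) (hq : q ∈ T₀) :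
    #{T ∈ transversals V 3 F | p ∈ T} < 3 * k := by
  obtain ⟨hT₀V, hT₀F⟩ := mem_transversals.1 hT₀
  obtain ⟨B, hB, hd⟩ := hτ {p, q} card_le_two
  rw [disjoint_insert_right, disjoint_singleton_right] at hd
  obtain ⟨z, hz, hzB⟩ := not_disjoint_iff.1 (hT₀F B hB)
  have hzq : z ≠ q := fun h => hd.2 (h ▸ hzB)
  have hcard : #((T₀.erase q).erase z) = 1 := by
    rw [card_erase_of_mem (mem_erase.2 ⟨hzq, hz⟩), card_erase_of_mem hq,
      (mem_powersetCard.1 hT₀V).2]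
  obtain ⟨w, hw⟩ := card_eq_one.1 hcard
  have hT₀eq : T₀ = {q, z, w} := by
    rw [← hw, insert_erase (mem_erase.2 ⟨hzq, hz⟩), insert_erase hq]
  have hpw : p ≠ w := fun h => hp (by rw [hT₀eq, h]; simp)
  have hsub : {T ∈ transversals V 3 F | p ∈ T} ⊆
      ({T ∈ transversals V 3 F | {p, q} ⊆ T} ∪ {T ∈ transversals V 3 F | {p, z} ⊆ T}) ∪
        {T ∈ transversals V 3 F | {p, w} ⊆ T} := by
    intro T hT
    obtain ⟨hT, hpT⟩ := mem_filter.1 hT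
    have := hint hT hT₀
    rw [hT₀eq, disjoint_insert_right, disjoint_insert_right, disjoint_singleton_right] at this
    simp only [mem_union, mem_filter, insert_subset_iff, singleton_subset_iff, hT, hpT, true_and]
    tauto
  have := card_filter_pair_union_lt (V := V) hτ hk (ne_of_mem_of_not_mem hq hp).symm hB
    hd.1 hd.2 hzB
  have := card_filter_pair_transversals_le (V := V) hτ hk hpw
  have := (card_le_card hsub).trans (card_union_le _ _)
  omega

lemma card_eq_of_pair_cover {𝒯 : Finset (Finset α)} (hpq : ∀ T ∈ 𝒯, p ∈ T ∨ q ∈ T) :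
    #𝒯 = #{T ∈ 𝒯 | {p, q} ⊆ T} + #(𝒯.nonMemberSubfamily q) + #(𝒯.nonMemberSubfamily p) := by
  have h₁ : {T ∈ {T ∈ 𝒯 | q ∈ T} | p ∈ T} = {T ∈ 𝒯 | {p, q} ⊆ T} := by
    rw [filter_filter]
    simp only [insert_subset_iff, singleton_subset_iff, and_comm]
  have h₂ : {T ∈ {T ∈ 𝒯 | q ∈ T} | p ∉ T} = 𝒯.nonMemberSubfamily p := by
    rw [filter_filter, nonMemberSubfamily]
    exact filter_congr fun T hT => and_iff_right_of_imp fun hp => (hpq T hT).resolve_left hp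
  rw [← card_filter_add_card_filter_not (s := 𝒯) (q ∈ ·),
    ← card_filter_add_card_filter_not (s := {T ∈ 𝒯 | q ∈ T}) (p ∈ ·), h₁, h₂]
  exact add_right_comm _ _ _

lemma card_memberSubfamily_nonMemberSubfamily {𝒯 : Finset (Finset α)}
    (hpq : ∀ T ∈ 𝒯, p ∈ T ∨ q ∈ T) :
    #((𝒯.nonMemberSubfamily q).memberSubfamily p) = #(𝒯.nonMemberSubfamily q) := by
  rw [card_memberSubfamily, filter_true_of_mem]
  intro T hT
  obtain ⟨hT, hqT⟩ := mem_nonMemberSubfamily.1 hT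
  exact (hpq T hT).resolve_right hqT

lemma card_filter_mem_memberSubfamily_le {𝒯 : Finset (Finset α)} (y : α)
    (hcodeg : ∀ y, p ≠ y → #{T ∈ 𝒯 | {p, y} ⊆ T} ≤ k) :
    #{e ∈ 𝒯.memberSubfamily p | y ∈ e} ≤ k := by
  by_cases hpy : p = y
  · subst hpy
    rw [filter_false_of_mem fun e he => (mem_memberSubfamily.1 he).2, card_empty]
    exact Nat.zero_le k
  refine le_trans (card_le_card_of_injOn (insert p) (fun e he => ?_) ?_) (hcodeg y hpy)
  · obtain ⟨he, hy⟩ := mem_filter.1 he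
    exact mem_filter.2 ⟨(mem_memberSubfamily.1 he).1, insert_subset (mem_insert_self p e)
      (singleton_subset_iff.2 (mem_insert_of_mem hy))⟩
  · exact insert_erase_invOn.2.injOn.mono fun e he =>
      (mem_memberSubfamily.1 (mem_filter.1 he).1).2

lemma card_le_three_mul_of_pair_cover {𝒯 : Finset (Finset α)}
    (h𝒯 : (𝒯 : Set (Finset α)).Sized 3) (hint : (𝒯 : Set (Finset α)).Intersecting)
    (hcodeg : ∀ x y, x ≠ y → #{T ∈ 𝒯 | {x, y} ⊆ T} ≤ k) (hk : 4 ≤ k) (hne : p ≠ q)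
    (hpq : ∀ T ∈ 𝒯, p ∈ T ∨ q ∈ T) (hp : 2 ≤ #(𝒯.nonMemberSubfamily p))
    (hq : 2 ≤ #(𝒯.nonMemberSubfamily q)) : #𝒯 ≤ 3 * k := by
  have hqp : ∀ T ∈ 𝒯, q ∈ T ∨ p ∈ T := fun T hT => (hpq T hT).symm
  have hsized {x y : α} :
      ((𝒯.nonMemberSubfamily y).memberSubfamily x : Set (Finset α)).Sized 2 := by
    intro e he
    obtain ⟨heT, hxe⟩ := mem_memberSubfamily.1 (mem_coe.1 he)
    have := h𝒯 (mem_nonMemberSubfamily.1 heT).1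
    rw [card_insert_of_notMem hxe] at this
    omega
  have hdeg {x y : α} (z : α) :
      #{e ∈ (𝒯.nonMemberSubfamily y).memberSubfamily x | z ∈ e} ≤ k :=
    card_filter_mem_memberSubfamily_le z fun z hxz =>
      (card_le_card (filter_subset_filter _ (filter_subset _ _))).trans (hcodeg x z hxz)
  have hcross : ∀ e ∈ (𝒯.nonMemberSubfamily q).memberSubfamily p,
      ∀ f ∈ (𝒯.nonMemberSubfamily p).memberSubfamily q, ¬ Disjoint e f := by
    intro e he f hf hd
    obtain ⟨heT, hqe⟩ := mem_nonMemberSubfamily.1 (mem_memberSubfamily.1 he).1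
    obtain ⟨hfT, hpf⟩ := mem_nonMemberSubfamily.1 (mem_memberSubfamily.1 hf).1
    refine hint heT hfT (disjoint_insert_left.2 ⟨hpf, disjoint_insert_right.2 ⟨?_, hd⟩⟩)
    exact fun h => hqe (mem_insert_of_mem h)
  have hsum := card_add_card_le_two_mul_of_cross_intersecting hsized hsized hcross hdeg hdeg hk
    (by rwa [card_memberSubfamily_nonMemberSubfamily hpq])
    (by rwa [card_memberSubfamily_nonMemberSubfamily hqp])
  rw [card_memberSubfamily_nonMemberSubfamily hpq,
    card_memberSubfamily_nonMemberSubfamily hqp] at hsum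
  have := card_eq_of_pair_cover hpq
  have := hcodeg p q hne
  omega

theorem card_transversals_three_le (hτ : CoverNumberGT F 2) (hF : ∀ B ∈ F, #B ≤ k)
    (hint : (transversals V 3 F : Set (Finset α)).Intersecting)
    (h𝒯 : CoverNumberGT (transversals V 3 F) 1) (hk : 4 ≤ k) :
    #(transversals V 3 F) ≤ 3 * k := by
  by_cases h2 : CoverNumberGT (transversals V 3 F) 2
  · exact (card_le_ten_of_isCoverThree ⟨filter_subset _ _, hint, h2⟩).trans (by omega)
  simp only [CoverNumberGT, not_forall, not_exists, not_and] at h2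
  obtain ⟨S, hS, hScover⟩ := h2
  have hS2 : #S = 2 := by
    refine hS.antisymm (Nat.succ_le_of_lt (lt_of_not_ge fun h1 => ?_))
    obtain ⟨T, hT, hd⟩ := h𝒯 S h1
    exact hScover T hT hd
  obtain ⟨p, q, hne, rfl⟩ := card_eq_two.1 hS2
  have hpq : ∀ T ∈ transversals V 3 F, p ∈ T ∨ q ∈ T := by
    intro T hT
    simpa only [disjoint_insert_right, disjoint_singleton_right, not_and_or, not_not] using
      hScover T hT
  have hsmall {p q : α} (hpq : ∀ T ∈ transversals V 3 F, p ∈ T ∨ q ∈ T)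
      (h1 : #((transversals V 3 F).nonMemberSubfamily p) ≤ 1) :
      #(transversals V 3 F) ≤ 3 * k := by
    obtain ⟨T₀, hT₀, hp⟩ := h𝒯.exists_notMem p
    have := card_filter_mem_transversals_lt hτ hF hint hT₀ hp ((hpq T₀ hT₀).resolve_left hp)
    rw [nonMemberSubfamily] at h1
    rw [← card_filter_add_card_filter_not (p ∈ ·)]
    omega
  obtain hp | hp := le_or_gt #((transversals V 3 F).nonMemberSubfamily p) 1
  · exact hsmall hpq hp
  obtain hq | hq := le_or_gt #((transversals V 3 F).nonMemberSubfamily q) 1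
  · exact hsmall (fun T hT => (hpq T hT).symm) hq
  exact card_le_three_mul_of_pair_cover
    (fun T hT => (mem_powersetCard.1 (mem_transversals.1 hT).1).2) hint
    (fun x y hxy => card_filter_pair_transversals_le hτ hF hxy) hk hne hpq hp hq

end ThreeTransversals

section Binomial

variable {a c r t : ℕ}

lemma mul_choose_le_choose_succ (h : c * (r + 1) ≤ a + 1) :
    c * a.choose r ≤ (a + 1).choose (r + 1) := by
  refine Nat.le_of_mul_le_mul_right ?_ r.succ_pos
  calc c * a.choose r * (r + 1) = c * (r + 1) * a.choose r := by ring
    _ ≤ (a + 1) * a.choose r := Nat.mul_le_mul_right _ h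
    _ = (a + 1).choose (r + 1) * (r + 1) := Nat.add_one_mul_choose_eq a r

lemma choose_succ_le_choose_sub_add_mul (a r t : ℕ) :
    (a + 1).choose (r + 1) ≤ (a + 1 - t).choose (r + 1) + t * a.choose r := by
  induction t with
  | zero => simp
  | succ t ih =>
    have hstep : (a + 1 - t).choose (r + 1) ≤
        (a + 1 - (t + 1)).choose (r + 1) + a.choose r := by
      obtain h | h := le_or_gt (a + 1) t
      · simp [Nat.sub_eq_zero_of_le h]
      · rw [show a + 1 - t = a + 1 - (t + 1) + 1 by omega, Nat.choose_succ_succ]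
        have := Nat.choose_le_choose r (show a + 1 - (t + 1) ≤ a by omega)
        rw [Nat.succ_eq_add_one]
        omega
    rw [Nat.succ_mul]
    omega

lemma choose_le_two_mul_choose_sub (h : 2 * t * r ≤ a) :
    a.choose r ≤ 2 * (a - t).choose r := by
  obtain _ | r := r
  · simp
  obtain _ | a := a
  · simp
  have hdrop := choose_succ_le_choose_sub_add_mul a r t
  have hloss := mul_choose_le_choose_succ h
  linarith

lemma choose_le_two_pow_mul_choose_sub {i : ℕ} (h : 2 * t * r ≤ a - i * t) :
    a.choose r ≤ 2 ^ i * (a - i * t).choose r := by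
  induction i with
  | zero => simp
  | succ i ih =>
    rw [Nat.succ_mul i, ← Nat.sub_sub] at h ⊢
    have hle := h.trans (Nat.sub_le _ _)
    calc a.choose r ≤ 2 ^ i * (a - i * t).choose r := ih hle
      _ ≤ 2 ^ i * (2 * (a - i * t - t).choose r) :=
        Nat.mul_le_mul_left _ (choose_le_two_mul_choose_sub hle)
      _ = 2 ^ (i + 1) * (a - i * t - t).choose r := by ring

lemma mul_choose_le_choose_add_one (h : c * (r + 1) ≤ a - r) :
    c * a.choose r ≤ a.choose (r + 1) := by
  refine Nat.le_of_mul_le_mul_right ?_ r.succ_pos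
  calc c * a.choose r * (r + 1) = a.choose r * (c * (r + 1)) := by ring
    _ ≤ a.choose r * (a - r) := Nat.mul_le_mul_left _ h
    _ = a.choose (r + 1) * (r + 1) := (Nat.choose_succ_right_eq a r).symm

lemma pow_mul_choose_le_choose_add {i : ℕ} (h : c * (r + i) ≤ a - (r + i)) :
    c ^ i * a.choose r ≤ a.choose (r + i) := by
  induction i with
  | zero => simp
  | succ i ih =>
    have hmul : c * (r + i) ≤ c * (r + (i + 1)) := Nat.mul_le_mul_left _ (by omega)
    calc c ^ (i + 1) * a.choose r = c * (c ^ i * a.choose r) := by ring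
      _ ≤ c * a.choose (r + i) := Nat.mul_le_mul_left _ (ih (by omega))
      _ ≤ a.choose (r + (i + 1)) := mul_choose_le_choose_add_one (by rw [add_assoc]; omega)

lemma choose_succ_add_mul_choose_le (a r t : ℕ) :
    a.choose (r + 1) + t * a.choose r ≤ (a + t).choose (r + 1) := by
  rw [choose_add_succ_eq_add_sum]
  have := card_nsmul_le_sum (range t) (fun l => (a + l).choose r) (a.choose r)
    fun l _ => Nat.choose_le_choose r (Nat.le_add_right a l)
  rw [card_range, smul_eq_mul] at this
  omega

end Binomial

lemma mul_choose_sub_four_le {c k n : ℕ} (hk : 4 ≤ k) (h : c * k ≤ n) :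
    c * (n - 4).choose (k - 4) ≤ (n - 3).choose (k - 3) := by
  obtain rfl | hc := c.eq_zero_or_pos
  · simp
  have hkn : k ≤ n := (Nat.le_mul_of_pos_left k hc).trans h
  rw [show n - 3 = n - 4 + 1 by omega, show k - 3 = k - 4 + 1 by omega]
  refine mul_choose_le_choose_succ ?_
  rw [show k - 4 + 1 = k - 3 by omega, Nat.mul_sub]
  omega

lemma choose_sub_three_le {k n : ℕ} (hk : 4 ≤ k) (hn : 4 ≤ n) :
    (n - 3).choose (k - 3) ≤ (n - 2 * k).choose (k - 3) + 2 * k * (n - 4).choose (k - 4) := by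
  have := choose_succ_le_choose_sub_add_mul (n - 4) (k - 4) (2 * k - 3)
  rw [show n - 4 + 1 = n - 3 by omega, show k - 4 + 1 = k - 3 by omega,
    show n - 3 - (2 * k - 3) = n - 2 * k by omega] at this
  exact this.trans (by gcongr; omega)

section Kernel

variable {α : Type*} [DecidableEq α] {V : Finset α} {F : Finset (Finset α)} {k r : ℕ}

lemma IsCoverThree.exists_transversals_subset (hF : IsCoverThree V k F) :
    ∃ F', F ⊆ F' ∧ IsCoverThree V k F' ∧ transversals V k F' ⊆ F' := by
  have hfin : {G | IsCoverThree V k G}.Finite :=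
    ((V.powersetCard k).powerset.finite_toSet).subset fun G hG => mem_powerset.2 hG.subset
  obtain ⟨F', hFF', hmax⟩ := hfin.exists_le_maximal hF
  have hF' : IsCoverThree V k F' := hmax.prop
  refine ⟨F', hFF', hF', fun T hT => ?_⟩
  obtain ⟨hTV, hTF'⟩ := mem_transversals.1 hT
  have hTne : T ≠ ⊥ := by
    rintro rfl
    obtain ⟨A, hA, -⟩ := hF'.coverNumberGT ∅ (by simp)
    exact hTF' A hA (disjoint_empty_left A)
  have hins : IsCoverThree V k (insert T F') :=
    { subset := insert_subset hTV hF'.subset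
      intersecting := by
        rw [coe_insert]
        exact hF'.intersecting.insert hTne hTF'
      coverNumberGT := hF'.coverNumberGT.mono (subset_insert T F') }
  exact hmax.le_of_ge hins (subset_insert T F') (mem_insert_self T F')

lemma intersecting_transversals (hF : transversals V k F ⊆ F) (hrk : r ≤ k) (hV : k + r ≤ #V) :
    (transversals V r F : Set (Finset α)).Intersecting := by
  intro T hT T' hT' hd
  obtain ⟨hTV, hTF⟩ := mem_transversals.1 hT
  obtain ⟨hT'V, hT'F⟩ := mem_transversals.1 hT'
  rw [mem_powersetCard] at hTV hT'V
  obtain ⟨A, hTA, hAV, hAk⟩ := exists_subsuperset_card_eq (subset_sdiff.2 ⟨hTV.1, hd⟩)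
    (hTV.2.trans_le hrk) (by rw [card_sdiff_of_subset hT'V.1]; omega)
  obtain ⟨hAV, hAT'⟩ := subset_sdiff.1 hAV
  exact hT'F A (hF (mem_transversals.2 ⟨mem_powersetCard.2 ⟨hAV, hAk⟩,
    fun B hB hAB => hTF B hB (hAB.mono_left hTA)⟩)) hAT'.symm

lemma exists_card_nonMemberSubfamily_le (hF : IsCoverThree V k F) (hk : 3 ≤ k)
    (hV : V.Nonempty) (h : ¬ CoverNumberGT (transversals V 3 F) 1) :
    ∃ x ∈ V, #(F.nonMemberSubfamily x) ≤ k ^ 4 * (#V - 4).choose (k - 4) := by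
  obtain ⟨x, hxV, hx⟩ : ∃ x ∈ V, ∀ T ∈ transversals V 3 F, x ∈ T := by
    obtain h𝒯 | ⟨T₀, hT₀⟩ := (transversals V 3 F).eq_empty_or_nonempty
    · obtain ⟨x, hx⟩ := hV
      exact ⟨x, hx, by simp [h𝒯]⟩
    simp only [CoverNumberGT, not_forall, not_exists, not_and] at h
    obtain ⟨S, hS, hS𝒯⟩ := h
    obtain ⟨x, hxT₀, hxS⟩ := not_disjoint_iff.1 (hS𝒯 T₀ hT₀)
    refine ⟨x, (mem_powersetCard.1 (mem_transversals.1 hT₀).1).1 hxT₀, fun T hT => ?_⟩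
    obtain ⟨y, hyT, hyS⟩ := not_disjoint_iff.1 (hS𝒯 T hT)
    rwa [card_le_one.1 hS x hxS y hyS]
  refine ⟨x, hxV, ?_⟩
  simpa only [empty_subset, filter_true] using
    card_filter_subset_le_of_forall_not_subset (S := ∅) (d := 4) (R := F.nonMemberSubfamily x)
      hF.subset hF.intersecting hk (filter_subset _ F)
      (fun A hA T hT _ hTA => (mem_nonMemberSubfamily.1 hA).2 (hTA (hx T hT))) (by simp)

lemma card_le_of_coverNumberGT_transversals (hF : IsCoverThree V k F)
    (hsat : transversals V k F ⊆ F) (hk : 4 ≤ k) (hV : k + 3 ≤ #V)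
    (h : CoverNumberGT (transversals V 3 F) 1) :
    #F ≤ 3 * k * (#V - 3).choose (k - 3) + k ^ 4 * (#V - 4).choose (k - 4) := by
  have h𝒯 := card_transversals_three_le hF.coverNumberGT (fun B hB => (hF.sized hB).le)
    (intersecting_transversals hsat (by omega) hV) h hk
  have hcount := card_filter_subset_le_card_transversals_mul_add (S := ∅) (q := 3) (d := 4)
    hF.subset hF.intersecting (by omega) (by simp)
  simp only [empty_subset, filter_true] at hcount
  grw [h𝒯] at hcount
  exact hcount

end Kernel

lemma card_le_card_C3fam_of_mul_pow_five_le {F : Finset (Finset ℕ)} {n k : ℕ}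
    (hF : IsCoverThree (Icc 1 n) k F) (hk : 4 ≤ k) (hn : 10 * k ^ 5 ≤ n) :
    #F ≤ #(C3fam n k) := by
  obtain ⟨F', hFF', hF', hsat⟩ := hF.exists_transversals_subset
  refine (card_le_card hFF').trans ?_
  have hk4 : 4 ^ 2 * k ^ 2 ≤ k ^ 4 := by
    rw [← mul_pow, show k ^ 4 = (k * k) ^ 2 by ring]
    exact Nat.pow_le_pow_left (Nat.mul_le_mul_right k hk) 2
  have hk2 : 4 * k ≤ k ^ 2 := by nlinarith
  have h2k : 2 * k + 3 ≤ n := by nlinarith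
  have hc : 10 * k ^ 4 * (n - 4).choose (k - 4) ≤ (n - 3).choose (k - 3) :=
    mul_choose_sub_four_le hk (by linarith [pow_succ k 4])
  have hdrop := choose_sub_three_le hk (show 4 ≤ n by omega)
  by_cases h𝒯 : CoverNumberGT (transversals (Icc 1 n) 3 F') 1
  · have hup := card_le_of_coverNumberGT_transversals hF' hsat hk
      (by rw [Nat.card_Icc]; omega) h𝒯
    rw [Nat.card_Icc, Nat.add_sub_cancel] at hup
    have hlow := mul_choose_add_three_le_card_C3fam (n := n) (u := k) (v := k - 1)
      (by omega) (by omega) (by omega) le_rfl (by omega)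
    rw [show n - 1 - (k + (k - 1)) = n - 2 * k by omega] at hlow
    have hmul : 3 * k + 1 ≤ k * (k - 1) + 1 := by
      rw [mul_comm]
      gcongr
      omega
    have hloss : (2 * k * (3 * k + 1) + k ^ 4) * (n - 4).choose (k - 4) ≤
        10 * k ^ 4 * (n - 4).choose (k - 4) := by
      gcongr
      nlinarith
    grw [← hmul] at hlow
    generalize (n - 3).choose (k - 3) = c₃ at *
    generalize (n - 4).choose (k - 4) = c₄ at *
    linarith [Nat.mul_le_mul_left (3 * k + 1) hdrop]
  · obtain ⟨x, hx, hFx⟩ := exists_card_nonMemberSubfamily_le hF' (by omega)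
      ⟨1, mem_Icc.2 (by omega)⟩ h𝒯
    refine card_le_card_C3fam_of_card_nonMemberSubfamily_le hF' (by omega) (by omega) hx ?_
    rw [Nat.card_Icc, Nat.add_sub_cancel] at hFx
    have hloss : (2 * k + k ^ 4) * (n - 4).choose (k - 4) ≤
        10 * k ^ 4 * (n - 4).choose (k - 4) := by
      gcongr
      nlinarith
    linarith

lemma card_le_card_C3fam_of_mul_sq_le {F : Finset (Finset ℕ)} {n k : ℕ}
    (hF : IsCoverThree (Icc 1 n) k F) (hk : 100 ≤ k) (hn : 100 * k ^ 2 ≤ n) :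
    #F ≤ #(C3fam n k) := by
  obtain ⟨F', hF', hcard, x, hx, hstar⟩ := exists_isCoverThree_card_le_three_mul hF
  rw [← hcard]
  have hkn : 99 * k * k ≤ n := by linarith
  have hkn' : 100 * 100 * k ≤ n := by nlinarith
  obtain hG | hG := le_or_gt #(F'.nonMemberSubfamily x) ((n - 2 * k).choose (k - 3) + 3)
  · exact card_le_card_C3fam_of_card_nonMemberSubfamily_le hF' (by omega) (by omega) hx hG
  have hc := mul_choose_sub_four_le (by omega) hkn
  have hdrop := choose_sub_three_le (show 4 ≤ k by omega) (show 4 ≤ n by omega)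
  have hlow := mul_choose_add_three_le_card_C3fam (n := n) (u := k) (v := k - 1)
    (by omega) (by omega) (by omega) le_rfl (by omega)
  rw [show n - 1 - (k + (k - 1)) = n - 2 * k by omega] at hlow
  have hup := card_memberSubfamily_le_of_lt_card_nonMemberSubfamily (x := x) hF' (by omega)
  rw [Nat.card_Icc, Nat.add_sub_cancel] at hup
  set c₃ := (n - 3).choose (k - 3)
  set c₄ := (n - 4).choose (k - 4)
  set E := (n - 2 * k).choose (k - 3)
  have h16 : 16 * c₄ ≤ E := by nlinarith
  have hE : 97 * c₃ ≤ 99 * E := by linarith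
  have hk2 : 891 * k + 3 * k ^ 2 ≤ 97 * (k * (k - 1) + 1) := by
    obtain ⟨i, rfl⟩ : ∃ i, k = i + 1 := ⟨k - 1, by omega⟩
    rw [Nat.add_sub_cancel]
    nlinarith
  have hcube : 99 * (k ^ 3 * c₄) ≤ k ^ 2 * c₃ := by
    calc 99 * (k ^ 3 * c₄) = k ^ 2 * (99 * k * c₄) := by ring
      _ ≤ k ^ 2 * c₃ := Nat.mul_le_mul_left _ hc
  suffices h : 99 * #F' ≤ 99 * ((k * (k - 1) + 1) * E) by omega
  calc 99 * #F' ≤ 99 * (3 * (3 * k * c₃ + k ^ 3 * c₄)) := by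
        grw [hstar, hup (h16.trans_lt (by omega))]
    _ ≤ (891 * k + 3 * k ^ 2) * c₃ := by linarith
    _ ≤ 97 * (k * (k - 1) + 1) * c₃ := Nat.mul_le_mul_right _ hk2
    _ = (k * (k - 1) + 1) * (97 * c₃) := by ring
    _ ≤ (k * (k - 1) + 1) * (99 * E) := Nat.mul_le_mul_left _ hE
    _ = 99 * ((k * (k - 1) + 1) * E) := by ring

section SmallGroundSetBinomials

variable {k n : ℕ}

lemma seven_mul_choose_add_three_le_card_C3fam (hk : 1000 ≤ k) (hn : 10 ^ 9 * k ≤ n)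
    (hn2 : n < 100 * k ^ 2) : 7 * (n - 2).choose (k - 2) + 3 ≤ #(C3fam n k) := by
  set u := n / (200 * k) with hu
  have hun : u * (200 * k) ≤ n := Nat.div_mul_le_self _ _
  have hnu : n < u * (200 * k) + 200 * k := Nat.lt_div_mul_add (by omega)
  have hu5 : 100000 ≤ u := by
    rw [hu, Nat.le_div_iff_mul_le (by omega)]
    omega
  have huk : u < k := by
    by_contra! h
    nlinarith [Nat.mul_le_mul_right (200 * k) h]
  have hlow := mul_choose_add_three_le_card_C3fam (n := n) (by omega) (by omega)
    (show 2 ≤ u by omega) huk.le huk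
  have hhalf : (n - 3).choose (k - 3) ≤ 2 * (n - 1 - (u + u)).choose (k - 3) := by
    rw [show n - 1 - (u + u) = n - 3 - (2 * u - 2) by omega]
    refine choose_le_two_mul_choose_sub ?_
    have : 2 * (2 * u - 2) * (k - 3) ≤ 4 * u * k := Nat.mul_le_mul (by omega) (by omega)
    have : u * (200 * k) = 50 * (4 * u * k) := by ring
    omega
  have hquad : 14 * (n - 2) ≤ u * u * (k - 2) := by
    have hk2 : u * u * k ≤ 2 * (u * u * (k - 2)) := by
      rw [mul_left_comm]
      exact Nat.mul_le_mul_left _ (by omega)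
    have h : n ≤ 400 * (u * k) := by nlinarith
    have : 100000 * n ≤ u * (400 * (u * k)) := Nat.mul_le_mul hu5 h
    have : u * (400 * (u * k)) = 400 * (u * u * k) := by ring
    omega
  have hfin : 14 * (n - 2).choose (k - 2) ≤ u * u * (n - 3).choose (k - 3) := by
    have hs := Nat.add_one_mul_choose_eq (n - 3) (k - 3)
    rw [show n - 3 + 1 = n - 2 by omega, show k - 3 + 1 = k - 2 by omega] at hs
    refine Nat.le_of_mul_le_mul_right ?_ (show 0 < k - 2 by omega)
    calc 14 * (n - 2).choose (k - 2) * (k - 2)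
        = 14 * (n - 2) * (n - 3).choose (k - 3) := by rw [mul_assoc, ← hs, mul_assoc]
      _ ≤ u * u * (k - 2) * (n - 3).choose (k - 3) := Nat.mul_le_mul_right _ hquad
      _ = u * u * (n - 3).choose (k - 3) * (k - 2) := by ring
  have := Nat.mul_le_mul_left (u * u) hhalf
  linarith

lemma choose_sub_five_le (hk : 1000 ≤ k) (hn : 2 ^ 101 * k < n) (hkn : k ^ 2 ≤ 10 * n) :
    (n - 5).choose (k - 4) ≤ (n - 2 * k).choose (k - 3) := by
  -- Removing `100 * t` points costs a factor `2 ^ 100`, and `2 * k ≤ 100 * t`.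
  set t := n / (4 * k)
  have htn : t * (4 * k) ≤ n := Nat.div_mul_le_self _ _
  have hnt : n < t * (4 * k) + 4 * k := Nat.lt_div_mul_add (by omega)
  have htk : k ≤ 40 * (t + 1) := by
    by_contra! h
    nlinarith [Nat.mul_lt_mul_of_pos_right h (show 0 < k by omega)]
  have h400 : t * 400 ≤ n := (Nat.mul_le_mul_left t (by omega)).trans htn
  have hdrop := choose_le_two_pow_mul_choose_sub (a := n - 4) (r := k - 3) (t := t) (i := 100) (by
    have : 2 * t * (k - 3) ≤ 2 * t * k := Nat.mul_le_mul_left _ (by omega)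
    have : t * (4 * k) = 2 * (2 * t * k) := by ring
    omega)
  have hmono : (n - 4 - 100 * t).choose (k - 3) ≤ (n - 2 * k).choose (k - 3) :=
    Nat.choose_le_choose _ (by omega)
  have hratio := mul_choose_le_choose_succ (c := 2 ^ 100) (a := n - 5) (r := k - 4) (by omega)
  rw [show n - 5 + 1 = n - 4 by omega, show k - 4 + 1 = k - 3 by omega] at hratio
  omega

lemma choose_sub_div_ten_le (hk : 1000 ≤ k) (hn : 2 ^ 101 * k < n) :
    (n - 1 - k / 10).choose (k - k / 10) ≤ (n - 2 * k).choose (k - 3) := by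
  have hdrop := choose_le_two_pow_mul_choose_sub (a := n - 1 - k / 10) (r := k - k / 10) (t := 1)
    (i := 2 * k) (by omega)
  have hraise := pow_mul_choose_le_choose_add (a := n - 2 * k) (r := k - k / 10) (c := 2 ^ 30)
    (i := k / 10 - 3) (by omega)
  rw [show k - k / 10 + (k / 10 - 3) = k - 3 by omega, ← pow_mul] at hraise
  calc (n - 1 - k / 10).choose (k - k / 10)
      ≤ 2 ^ (2 * k) * (n - 1 - k / 10 - 2 * k * 1).choose (k - k / 10) := hdrop
    _ ≤ 2 ^ (30 * (k / 10 - 3)) * (n - 2 * k).choose (k - k / 10) :=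
      Nat.mul_le_mul (Nat.pow_le_pow_right two_pos (by omega))
        (Nat.choose_le_choose _ (by omega))
    _ ≤ (n - 2 * k).choose (k - 3) := hraise

lemma six_mul_choose_le (hk : 1000 ≤ k) (hn : 2 ^ 101 * k < n) (hkn : 10 * n < k ^ 2) :
    6 * (n - k - 1).choose (k - 1) ≤ (n - 1 - k / 10).choose (k - 1) := by
  have hrise := choose_succ_add_mul_choose_le (n - k - 1) (k - 2) (k - k / 10)
  rw [show k - 2 + 1 = k - 1 by omega,
    show n - k - 1 + (k - k / 10) = n - 1 - k / 10 by omega] at hrise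
  have hratio := Nat.choose_succ_right_eq (n - k - 1) (k - 2)
  rw [show k - 2 + 1 = k - 1 by omega] at hratio
  have hquad : 5 * (n - k - 1 - (k - 2)) ≤ (k - k / 10) * (k - 1) := by
    have h9 : 9 * k ≤ 10 * (k - k / 10) := by omega
    have : 9 * k * (4 * (k - 1)) ≤ 10 * (k - k / 10) * (4 * (k - 1)) := Nat.mul_le_mul_right _ h9
    have : 9 * k * (3 * k) ≤ 9 * k * (4 * (k - 1)) := Nat.mul_le_mul_left _ (by omega)
    have : 5 * (n - k - 1 - (k - 2)) ≤ 5 * n := by omega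
    nlinarith
  have hfive : 5 * (n - k - 1).choose (k - 1) ≤ (k - k / 10) * (n - k - 1).choose (k - 2) := by
    refine Nat.le_of_mul_le_mul_right ?_ (show 0 < k - 1 by omega)
    calc 5 * (n - k - 1).choose (k - 1) * (k - 1)
        = 5 * (n - k - 1 - (k - 2)) * (n - k - 1).choose (k - 2) := by
          rw [mul_assoc, hratio]; ring
      _ ≤ (k - k / 10) * (k - 1) * (n - k - 1).choose (k - 2) := Nat.mul_le_mul_right _ hquad
      _ = (k - k / 10) * (n - k - 1).choose (k - 2) * (k - 1) := by ring
  omega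

lemma two_mul_choose_sub_le {s : ℕ} (hs : 3 ≤ s) (hsk : s ≤ k) (hn : 10 * k ≤ n) :
    2 * (n - s).choose (k - (s - 1)) ≤ (n - 1 - s).choose (k - 1) := by
  have hmono := pow_mul_choose_le_choose_add (a := n - s) (r := k - (s - 1)) (c := 1) (i := s - 3)
    (by omega)
  rw [one_pow, one_mul, show k - (s - 1) + (s - 3) = k - 2 by omega] at hmono
  have hhalf := choose_le_two_mul_choose_sub (a := n - s) (r := k - 2) (t := 1) (by omega)
  rw [Nat.sub_right_comm] at hhalf
  have hratio := mul_choose_le_choose_add_one (c := 4) (a := n - 1 - s) (r := k - 2) (by omega)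
  rw [show k - 2 + 1 = k - 1 by omega] at hratio
  omega

end SmallGroundSetBinomials

section LinkBound

variable {α : Type*} [DecidableEq α] {V : Finset α} {F : Finset (Finset α)} {k s : ℕ} {x : α}

lemma card_memberSubfamily_add_choose_le (hF : F ⊆ V.powersetCard k)
    (hint : (F : Set (Finset α)).Intersecting) (hx : x ∈ V) (hsk : s ≤ k) (hk : 1 ≤ k)
    (hV : 2 * k < #V) (hcard : (#V - 1 - s).choose (k - s) ≤ #(F.nonMemberSubfamily x)) :
    #(F.memberSubfamily x) + (#V - 1 - s).choose (k - 1) ≤ (#V - 1).choose (k - 1) := by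
  have hVx : #(V.erase x) = #V - 1 := card_erase_of_mem hx
  have hmiss := choose_le_card_nonTransversals_of_choose_le_card
    (nonMemberSubfamily_subset_powersetCard_erase hF x) hsk hk (by omega) (by rwa [hVx])
  rw [hVx] at hmiss
  have := card_memberSubfamily_add_card_nonTransversals_le hF hint hx
  omega

lemma card_memberSubfamily_le_mul_choose (hF : F ⊆ V.powersetCard k)
    (hint : (F : Set (Finset α)).Intersecting) (hx : x ∈ V) (hsk : s ≤ k) (hk : 2 ≤ k)
    (hV : 2 * k < #V) (hcard : (#V - 1 - s).choose (k - s) ≤ #(F.nonMemberSubfamily x)) :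
    #(F.memberSubfamily x) ≤ s * (#V - 2).choose (k - 2) := by
  have hKK := card_memberSubfamily_add_choose_le hF hint hx hsk (by omega) hV hcard
  have hdrop := choose_succ_le_choose_sub_add_mul (#V - 2) (k - 2) s
  rw [show #V - 2 + 1 = #V - 1 by omega, show k - 2 + 1 = k - 1 by omega] at hdrop
  omega

end LinkBound

section SmallGroundSet

variable {F : Finset (Finset ℕ)} {k n x : ℕ}

lemma exists_choose_le_and_lt {g : ℕ} (hk : 1000 ≤ k) (hn : 2 ^ 101 * k < n)
    (hlow : (n - 2 * k).choose (k - 3) ≤ g) (hup : g < (n - 3).choose (k - 2)) :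
    ∃ s, 3 ≤ s ∧ s ≤ k / 10 ∧
      (n - 1 - s).choose (k - s) ≤ g ∧ g < (n - s).choose (k - (s - 1)) := by
  have hten : (n - 3 - (k / 10 - 2)).choose (k - 2 - (k / 10 - 2)) ≤ g := by
    rw [show n - 3 - (k / 10 - 2) = n - 1 - k / 10 by omega,
      show k - 2 - (k / 10 - 2) = k - k / 10 by omega]
    exact (choose_sub_div_ten_le hk hn).trans hlow
  have hex : ∃ i, (n - 3 - i).choose (k - 2 - i) ≤ g := ⟨_, hten⟩
  obtain ⟨i, hi⟩ : ∃ i, Nat.find hex = i + 1 :=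
    Nat.exists_eq_succ_of_ne_zero fun h => hup.not_ge ((Nat.find_eq_zero hex).1 h)
  have hle : i + 1 ≤ k / 10 - 2 := hi ▸ Nat.find_min' hex hten
  have hspec := Nat.find_spec hex
  have hmin := not_le.1 (Nat.find_min hex (by omega : i < Nat.find hex))
  rw [hi] at hspec
  refine ⟨i + 3, by omega, by omega, ?_, ?_⟩
  · rwa [show n - 1 - (i + 3) = n - 3 - (i + 1) by omega,
      show k - (i + 3) = k - 2 - (i + 1) by omega]
  · rwa [show n - (i + 3) = n - 3 - i by omega, show k - (i + 3 - 1) = k - 2 - i by omega]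

lemma card_le_card_C3fam_of_ten_mul_lt_sq (hF : IsCoverThree (Icc 1 n) k F) (hk : 1000 ≤ k)
    (hn : 2 ^ 101 * k < n) (hkn : 10 * n < k ^ 2) (hx : x ∈ Icc 1 n)
    (hlow : (n - 2 * k).choose (k - 3) ≤ #(F.nonMemberSubfamily x))
    (hup : #(F.nonMemberSubfamily x) < (n - 3).choose (k - 2)) : #F ≤ #(C3fam n k) := by
  obtain ⟨s, hs3, hsk, hsG, hGs⟩ := exists_choose_le_and_lt hk hn hlow hup
  have hcard : #(Icc 1 n) = n := by rw [Nat.card_Icc, Nat.add_sub_cancel]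
  have hsplit := card_memberSubfamily_add_card_nonMemberSubfamily x F
  have hstar := card_memberSubfamily_add_choose_le hF.subset hF.intersecting hx
    (show s ≤ k by omega) (by omega) (by omega) (by rwa [hcard])
  rw [hcard] at hstar
  have hhalf := two_mul_choose_sub_le hs3 (show s ≤ k by omega) (show 10 * k ≤ n by omega)
  have hsix := six_mul_choose_le hk hn hkn
  have hmono : (n - 1 - k / 10).choose (k - 1) ≤ (n - 1 - s).choose (k - 1) :=
    Nat.choose_le_choose _ (by omega)
  have hpascal := Nat.choose_succ_succ (n - k - 2) (k - 2)
  rw [show (n - k - 2).succ = n - k - 1 by omega, show (k - 2).succ = k - 1 by omega] at hpascal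
  have hC3 := choose_add_choose_add_three_le_card_C3fam (n - 2 * k) (k - 3)
  rw [show n - 2 * k + 2 * (k - 3) + 6 = n by omega,
    show n - 2 * k + 2 * (k - 3) + 5 = n - 1 by omega,
    show k - 3 + 1 = k - 2 by omega, show k - 3 + 2 = k - 1 by omega,
    show k - 3 + 3 = k by omega, show n - 2 * k + (k - 3) + 2 = n - k - 1 by omega,
    show n - 2 * k + (k - 3) + 1 = n - k - 2 by omega] at hC3
  omega

lemma card_le_card_C3fam_of_lt_mul_sq (hF : IsCoverThree (Icc 1 n) k F)
    (hn : 2 ^ 101 * k < n) (hn2 : n < 100 * k ^ 2) : #F ≤ #(C3fam n k) := by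
  have hk : 1000 ≤ k := by nlinarith
  obtain ⟨F', hF', hcard, x, hx, hstar⟩ := exists_isCoverThree_card_le_three_mul hF
  rw [← hcard]
  obtain hG | hG := le_or_gt #(F'.nonMemberSubfamily x) ((n - 2 * k).choose (k - 3) + 3)
  · exact card_le_card_C3fam_of_card_nonMemberSubfamily_le hF' (by omega) (by omega) hx hG
  have hseven := seven_mul_choose_add_three_le_card_C3fam hk (by omega) hn2
  have hN : #(Icc 1 n) = n := by rw [Nat.card_Icc, Nat.add_sub_cancel]
  have hlink : ∀ s ≤ k, (n - 1 - s).choose (k - s) ≤ #(F'.nonMemberSubfamily x) →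
      #(F'.memberSubfamily x) ≤ s * (n - 2).choose (k - 2) := by
    intro s hsk hs
    simpa only [hN] using card_memberSubfamily_le_mul_choose hF'.subset hF'.intersecting hx hsk
      (by omega) (by omega) (by rwa [hN])
  obtain hG2 | hG2 := le_or_gt ((n - 1 - 2).choose (k - 2)) #(F'.nonMemberSubfamily x)
  · have := hlink 2 (by omega) hG2
    omega
  rw [show n - 1 - 2 = n - 3 by omega] at hG2
  obtain hkn | hkn := le_or_gt (k ^ 2) (10 * n)
  · have hG4 := (choose_sub_five_le hk hn hkn).trans ((Nat.le_add_right _ 3).trans hG.le)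
    have := hlink 4 (by omega) (by rwa [Nat.sub_sub])
    have hsplit := card_memberSubfamily_add_card_nonMemberSubfamily x F'
    have : (n - 3).choose (k - 2) ≤ (n - 2).choose (k - 2) := Nat.choose_le_choose _ (by omega)
    omega
  · exact card_le_card_C3fam_of_ten_mul_lt_sq hF' hk hn hkn hx (by omega) hG2

end SmallGroundSet

lemma isCoverThree_iff {F : Finset (Finset ℕ)} {V : Finset ℕ} {k : ℕ} :
    IsCoverThree V k F ↔ F ⊆ V.powersetCard k ∧ (∀ A ∈ F, ∀ B ∈ F, (A ∩ B).Nonempty) ∧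
      ¬ ∃ S : Finset ℕ, #S ≤ 2 ∧ covers S F := by
  have hint : (F : Set (Finset ℕ)).Intersecting ↔ ∀ A ∈ F, ∀ B ∈ F, (A ∩ B).Nonempty := by
    simp only [Set.Intersecting, mem_coe, not_disjoint_iff_nonempty_inter]
  have hτ : CoverNumberGT F 2 ↔ ¬ ∃ S : Finset ℕ, #S ≤ 2 ∧ covers S F := by
    simp only [CoverNumberGT, covers, not_exists, not_and, not_forall, not_nonempty_iff_eq_empty,
      disjoint_iff_inter_eq_empty, inter_comm, exists_prop]
  rw [← hint, ← hτ]
  exact ⟨fun h => ⟨h.subset, h.intersecting, h.coverNumberGT⟩, fun h => ⟨h.1, h.2.1, h.2.2⟩⟩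

lemma IsCoverThree.card_le_card_C3fam {F : Finset (Finset ℕ)} {n k : ℕ}
    (hF : IsCoverThree (Icc 1 n) k F) (hk : 3 ≤ k) (hn : 2 ^ 101 * k < n) :
    #F ≤ #(C3fam n k) := by
  obtain rfl | hk4 := hk.eq_or_lt
  · have hten := card_le_ten_of_isCoverThree hF
    have hlow := mul_choose_add_three_le_card_C3fam (n := n) (u := 3) (v := 2) hk (by omega)
      (by omega) le_rfl (by omega)
    simp only [Nat.sub_self, Nat.choose_zero_right] at hlow
    omega
  obtain hk100 | hk100 := lt_or_ge k 100
  · have hpow : k ^ 4 * k ≤ 100 ^ 4 * k :=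
      Nat.mul_le_mul_right k (Nat.pow_le_pow_left hk100.le 4)
    exact card_le_card_C3fam_of_mul_pow_five_le hF hk4 (by rw [pow_succ]; omega)
  obtain hn2 | hn2 := lt_or_ge n (100 * k ^ 2)
  · exact card_le_card_C3fam_of_lt_mul_sq hF hn hn2
  · exact card_le_card_C3fam_of_mul_sq_le hF hk100 hn2

/-- For `k ≥ 3` and `n > Ck` (absolute constant `C`), the maximum size of an intersecting
family `F ⊆ C([n],k)` with covering number `τ(F) ≥ 3` is `|C_3(n,k)|`: every such `F`
satisfies `|F| ≤ |C_3(n,k)|`, and `C_3(n,k)` itself is such a family. -/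
theorem cover_three_maximum :
    ∃ C : ℕ, ∀ n k : ℕ, 3 ≤ k → C * k < n →
      ((∀ F : Finset (Finset ℕ), F ⊆ (Finset.Icc 1 n).powersetCard k →
          (∀ A ∈ F, ∀ B ∈ F, (A ∩ B).Nonempty) →
          (¬ ∃ S : Finset ℕ, S.card ≤ 2 ∧ covers S F) →
          F.card ≤ (C3fam n k).card) ∧
        C3fam n k ⊆ (Finset.Icc 1 n).powersetCard k ∧
        (∀ A ∈ C3fam n k, ∀ B ∈ C3fam n k, (A ∩ B).Nonempty) ∧
        (¬ ∃ S : Finset ℕ, S.card ≤ 2 ∧ covers S (C3fam n k))) :=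
  ⟨2 ^ 101, fun n k hk hn =>
    ⟨fun _ hF hint hτ => (isCoverThree_iff.2 ⟨hF, hint, hτ⟩).card_le_card_C3fam hk hn,
      isCoverThree_iff.1 (isCoverThree_C3fam hk (by omega))⟩⟩
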